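/- arXiv:1211.3442 — 3 statements merged into one kernel-verified Lean document; each statement's English description precedes it below -/
import Mathlib

section
/- Let F be a Ferrers board in F_n with border vertices V_0,…,V_{2n} and height sequence h_0…h_{2n}, and let (R,F) be a 321-avoiding full rook placement. For 0 ≤ i ≤ 2n let ℓ_i be the length of the longest increasing subsequence of the permutation determined by R ∩ Γ(V_i), and set j_i = 2ℓ_i − h_i. Then j_0 = j_{2n} = 0, |j_{i+1} − j_i| = 1 for all 0 ≤ i < 2n, and 0 ≤ j_i ≤ h_i for all i; that is, j_0…j_{2n} is the height sequence of a Dyck path lying weakly below D_F. -/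
/-! ### Patterns of length 3 and 4 as permutations (0-indexed values) -/

def p123 : Equiv.Perm (Fin 3) :=
  ⟨![0,1,2], ![0,1,2], by intro x; fin_cases x <;> rfl, by intro x; fin_cases x <;> rfl⟩
def p132 : Equiv.Perm (Fin 3) :=
  ⟨![0,2,1], ![0,2,1], by intro x; fin_cases x <;> rfl, by intro x; fin_cases x <;> rfl⟩
def p213 : Equiv.Perm (Fin 3) :=
  ⟨![1,0,2], ![1,0,2], by intro x; fin_cases x <;> rfl, by intro x; fin_cases x <;> rfl⟩
def p231 : Equiv.Perm (Fin 3) :=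
  ⟨![1,2,0], ![2,0,1], by intro x; fin_cases x <;> rfl, by intro x; fin_cases x <;> rfl⟩
def p312 : Equiv.Perm (Fin 3) :=
  ⟨![2,0,1], ![1,2,0], by intro x; fin_cases x <;> rfl, by intro x; fin_cases x <;> rfl⟩
def p321 : Equiv.Perm (Fin 3) :=
  ⟨![2,1,0], ![2,1,0], by intro x; fin_cases x <;> rfl, by intro x; fin_cases x <;> rfl⟩
def p1342 : Equiv.Perm (Fin 4) :=
  ⟨![0,2,3,1], ![0,3,1,2], by intro x; fin_cases x <;> rfl, by intro x; fin_cases x <;> rfl⟩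
def p1324 : Equiv.Perm (Fin 4) :=
  ⟨![0,2,1,3], ![0,2,1,3], by intro x; fin_cases x <;> rfl, by intro x; fin_cases x <;> rfl⟩

/-! ### Perfect matchings of `[2n] = {1, …, 2n}` as finsets of pairs `(i,j)`, `i < j` -/

/-- `M` is a perfect matching of `{1, …, 2n}`. -/
def IsPerfectMatching (n : ℕ) (M : Finset (ℕ × ℕ)) : Prop :=
  (∀ p ∈ M, p.1 < p.2 ∧ 1 ≤ p.1 ∧ p.2 ≤ 2 * n) ∧
  ∀ x, 1 ≤ x → x ≤ 2 * n → ∃! p, p ∈ M ∧ (p.1 = x ∨ p.2 = x)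

/-- The matching `M` contains the pattern `τ ∈ S_k`: there are
`i_1 < i_2 < ⋯ < i_{2k}` with `(i_a, i_{2k+1-τ(a)}) ∈ M` for all `1 ≤ a ≤ k`
(written here 0-indexed). -/
def MatchContains {k : ℕ} (τ : Equiv.Perm (Fin k)) (M : Finset (ℕ × ℕ)) : Prop :=
  ∃ f : Fin (2 * k) → ℕ, StrictMono f ∧
    ∀ a : Fin k,
      (f ⟨a.1, by have := a.isLt; omega⟩,
       f ⟨2 * k - 1 - (τ a).1, by have := (τ a).isLt; omega⟩) ∈ M

def MatchAvoids {k : ℕ} (τ : Equiv.Perm (Fin k)) (M : Finset (ℕ × ℕ)) : Prop :=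
  ¬ MatchContains τ M

/-! ### Dyck paths as lists of booleans (`true` = east step, `false` = south step) -/

/-- A Dyck path of semilength `n`, from `(0,n)` to `(n,0)`, staying weakly above `y = n - x`. -/
def IsDyckPath (n : ℕ) (t : List Bool) : Prop :=
  t.length = 2 * n ∧ t.count true = n ∧
  ∀ i, (t.take i).count false ≤ (t.take i).count true

/-- The height (distance above the diagonal) of the `i`-th vertex of the path `t`. -/
def pathHeight (t : List Bool) (i : ℕ) : ℤ :=
  ((t.take i).count true : ℤ) - ((t.take i).count false : ℤ)

/-- `s` lies weakly below `t` (for paths of the same semilength). -/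
def WeaklyBelow (s t : List Bool) : Prop := ∀ i, pathHeight s i ≤ pathHeight t i

/-- The shape of a matching of `[2n]`: an east step for each opener, a south step for
each closer. -/
def shapeOf (n : ℕ) (M : Finset (ℕ × ℕ)) : List Bool :=
  (List.range (2 * n)).map fun x => decide ((x + 1) ∈ M.image Prod.fst)

/-- Number of returns of a path: south steps ending on the diagonal. -/
def returnsOf (t : List Bool) : ℕ :=
  ((Finset.range t.length).filter fun i =>
    t[i]? = some false ∧ (t.take (i+1)).count true = (t.take (i+1)).count false).card

/-- Height sequence of a path, as natural numbers. -/
def hseq (t : List Bool) (i : ℕ) : ℕ := (t.take i).count true - (t.take i).count false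

/-- `η(F)`: the number of indices `0 ≤ i ≤ 2n` with `h_i = 2`. -/
def etaOf (n : ℕ) (t : List Bool) : ℕ :=
  ((Finset.range (2 * n + 1)).filter fun i => hseq t i = 2).card

/-! ### Full rook placements on Ferrers boards -/

/-- The square in column `c`, row `r` (both 1-indexed from the bottom left) belongs to the
Ferrers board with border path `t ∈ F_n`. -/
def InBoard (n : ℕ) (t : List Bool) (c r : ℕ) : Prop :=
  1 ≤ c ∧ 1 ≤ r ∧ ∃ i, c ≤ (t.take i).count true ∧ (t.take i).count false + r ≤ n

/-- `R` is a full rook placement on the Ferrers board with border path `t ∈ F_n`: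
one rook in each of the `n` rows and `n` columns. -/
def IsFullRookPlacement (n : ℕ) (t : List Bool) (R : Finset (ℕ × ℕ)) : Prop :=
  (∀ p ∈ R, InBoard n t p.1 p.2) ∧
  (∀ c, 1 ≤ c → c ≤ n → ∃! p, p ∈ R ∧ p.1 = c) ∧
  (∀ r, 1 ≤ r → r ≤ n → ∃! p, p ∈ R ∧ p.2 = r)

/-- The rooks of `R` lying in the rectangle `Γ(V_i)` determined by the `i`-th border vertex. -/
def rectRooks (n : ℕ) (t : List Bool) (R : Finset (ℕ × ℕ)) (i : ℕ) : Finset (ℕ × ℕ) :=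
  R.filter fun p => p.1 ≤ (t.take i).count true ∧ p.2 + (t.take i).count false ≤ n

/-- Length of the longest increasing sequence (in both coordinates) in a finite point set. -/
def lisLen (S : Finset (ℕ × ℕ)) : ℕ :=
  (S.powerset.filter fun T => ∀ p ∈ T, ∀ q ∈ T, p.1 < q.1 → p.2 < q.2).sup Finset.card

/-- The full rook placement `R` on the board with border `t ∈ F_n` contains the pattern `τ`:
some rectangle `Γ(V_i)` contains an occurrence of `τ`. -/
def PlacementContains {k : ℕ} (τ : Equiv.Perm (Fin k)) (n : ℕ) (t : List Bool)
    (R : Finset (ℕ × ℕ)) : Prop :=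
  ∃ i ≤ 2 * n, ∃ f : Fin k → ℕ × ℕ,
    (∀ a, f a ∈ R ∧ (f a).1 ≤ (t.take i).count true ∧ (f a).2 + (t.take i).count false ≤ n) ∧
    (∀ a b : Fin k, a < b → (f a).1 < (f b).1) ∧
    (∀ a b : Fin k, τ a < τ b → (f a).2 < (f b).2)

def PlacementAvoids {k : ℕ} (τ : Equiv.Perm (Fin k)) (n : ℕ) (t : List Bool)
    (R : Finset (ℕ × ℕ)) : Prop :=
  ¬ PlacementContains τ n t R

/-- `R` is board-minimal on the board with border `t`: every peak corner square holds a rook. -/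
def BoardMinimal (n : ℕ) (t : List Bool) (R : Finset (ℕ × ℕ)) : Prop :=
  ∀ i, t[i]? = some true → t[i+1]? = some false →
    ((t.take (i+1)).count true, n - (t.take (i+1)).count false) ∈ R

/-- Board-minimal full rook placements on boards of `F_n` avoiding the pattern `σ`,
recorded as pairs (border path, rook set). -/
def MinPlacements (n : ℕ) {k : ℕ} (σ : Equiv.Perm (Fin k)) :
    Set (List Bool × Finset (ℕ × ℕ)) :=
  {tR | IsDyckPath n tR.1 ∧ IsFullRookPlacement n tR.1 tR.2 ∧ BoardMinimal n tR.1 tR.2 ∧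
        PlacementAvoids σ n tR.1 tR.2}

/-! ### Pattern avoidance in permutations -/

def PermContains {n k : ℕ} (τ : Equiv.Perm (Fin k)) (π : Equiv.Perm (Fin n)) : Prop :=
  ∃ f : Fin k → Fin n, StrictMono f ∧ ∀ a b : Fin k, τ a < τ b → π (f a) < π (f b)

def PermAvoids {n k : ℕ} (τ : Equiv.Perm (Fin k)) (π : Equiv.Perm (Fin n)) : Prop :=
  ¬ PermContains τ π

/-- The full rook placement associated to a permutation of `[n]`. -/
def permPlacement {n : ℕ} (π : Equiv.Perm (Fin n)) : Finset (ℕ × ℕ) :=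
  Finset.univ.image fun i : Fin n => ((i : ℕ) + 1, (π i : ℕ) + 1)

/-! ### Matchings with fixed points -/

/-- A (not necessarily perfect) matching on `{1, …, m}`: pairwise disjoint pairs. -/
def IsPartialMatching (m : ℕ) (M : Finset (ℕ × ℕ)) : Prop :=
  (∀ p ∈ M, p.1 < p.2 ∧ 1 ≤ p.1 ∧ p.2 ≤ m) ∧
  ∀ p ∈ M, ∀ q ∈ M, p ≠ q → p.1 ≠ q.1 ∧ p.1 ≠ q.2 ∧ p.2 ≠ q.1 ∧ p.2 ≠ q.2

/-- The fixed points (unmatched vertices) of a matching on `{1, …, m}`. -/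
def fixedPts (m : ℕ) (M : Finset (ℕ × ℕ)) : Finset ℕ :=
  (Finset.Icc 1 m).filter fun x => ∀ p ∈ M, p.1 ≠ x ∧ p.2 ≠ x

/-- The matched vertices of a matching on `{1, …, m}`. -/
def matchedSet (m : ℕ) (M : Finset (ℕ × ℕ)) : Finset ℕ :=
  (Finset.Icc 1 m).filter fun x => ∃ p ∈ M, p.1 = x ∨ p.2 = x

/-- The rank (1-based) of `x` inside the finset `S`. -/
def rankIn (S : Finset ℕ) (x : ℕ) : ℕ := (S.filter (· ≤ x)).card

/-- The matching obtained by removing the fixed points and relabeling increasingly. -/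
def relabeled (m : ℕ) (M : Finset (ℕ × ℕ)) : Finset (ℕ × ℕ) :=
  M.image fun p => (rankIn (matchedSet m M) p.1, rankIn (matchedSet m M) p.2)

/-! ### Set partitions -/

/-- `(i,j)` is an arc of the set partition `P` of `{1, …, n}`: `i < j` lie in a common block
with no element of that block strictly between them. -/
def PartArc {n : ℕ} (P : Finpartition (Finset.Icc 1 n)) (i j : ℕ) : Prop :=
  i < j ∧ ∃ B ∈ P.parts, i ∈ B ∧ j ∈ B ∧ ∀ x ∈ B, ¬(i < x ∧ x < j)

/-- The set partition `P` contains the pattern `τ ∈ S_k`. -/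
def PartContains {k n : ℕ} (τ : Equiv.Perm (Fin k)) (P : Finpartition (Finset.Icc 1 n)) : Prop :=
  ∃ f : Fin (2 * k) → ℕ, StrictMono f ∧
    ∀ a : Fin k,
      PartArc P (f ⟨a.1, by have := a.isLt; omega⟩)
        (f ⟨2 * k - 1 - (τ a).1, by have := (τ a).isLt; omega⟩)

def PartAvoids {k n : ℕ} (τ : Equiv.Perm (Fin k)) (P : Finpartition (Finset.Icc 1 n)) : Prop :=
  ¬ PartContains τ P

/-! ### Counting functions -/

/-- `|M_n(τ)|`: the number of `τ`-avoiding perfect matchings of `[2n]`. -/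
noncomputable def mcount {k : ℕ} (τ : Equiv.Perm (Fin k)) (n : ℕ) : ℕ :=
  {M : Finset (ℕ × ℕ) | IsPerfectMatching n M ∧ MatchAvoids τ M}.ncard

/-- `|M_n(σ,τ)|`: the number of perfect matchings of `[2n]` avoiding both `σ` and `τ`. -/
noncomputable def mcount2 {k : ℕ} (σ τ : Equiv.Perm (Fin k)) (n : ℕ) : ℕ :=
  {M : Finset (ℕ × ℕ) | IsPerfectMatching n M ∧ MatchAvoids σ M ∧ MatchAvoids τ M}.ncard

/-- `|P_n(τ)|`: the number of `τ`-avoiding set partitions of `[n]`. -/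
noncomputable def pcount {k : ℕ} (τ : Equiv.Perm (Fin k)) (n : ℕ) : ℕ :=
  Nat.card {P : Finpartition (Finset.Icc 1 n) // PartAvoids τ P}

/-- `|P_n(σ,τ)|`: the number of set partitions of `[n]` avoiding both `σ` and `τ`. -/
noncomputable def pcount2 {k : ℕ} (σ τ : Equiv.Perm (Fin k)) (n : ℕ) : ℕ :=
  Nat.card {P : Finpartition (Finset.Icc 1 n) // PartAvoids σ P ∧ PartAvoids τ P}

/-- `|S_n(τ)|`: the number of `τ`-avoiding permutations of `[n]`. -/
noncomputable def scount {k : ℕ} (τ : Equiv.Perm (Fin k)) (n : ℕ) : ℕ :=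
  Nat.card {π : Equiv.Perm (Fin n) // PermAvoids τ π}

lemma lis_aux_le (S T : Finset (ℕ × ℕ)) (hT : T ⊆ S)
    (h : ∀ p ∈ T, ∀ q ∈ T, p.1 < q.1 → p.2 < q.2) : T.card ≤ lisLen S := by
  unfold lisLen
  exact Finset.le_sup (f := Finset.card) (Finset.mem_filter.2 ⟨Finset.mem_powerset.2 hT, h⟩)

lemma lis_aux_card (S : Finset (ℕ × ℕ)) : lisLen S ≤ S.card := by
  unfold lisLen
  apply Finset.sup_le
  intro T hT
  exact Finset.card_le_card (Finset.mem_powerset.1 (Finset.mem_filter.1 hT).1)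

lemma lis_aux_mono (S S' : Finset (ℕ × ℕ)) (h : S ⊆ S') : lisLen S ≤ lisLen S' := by
  conv_lhs => unfold lisLen
  apply Finset.sup_le
  intro T hT
  obtain ⟨h1, h2⟩ := Finset.mem_filter.1 hT
  exact lis_aux_le _ _ ((Finset.mem_powerset.1 h1).trans h) h2

lemma lis_aux_step (S S' : Finset (ℕ × ℕ)) (h : S ⊆ S') (hc : S'.card = S.card + 1) :
    lisLen S' ≤ lisLen S + 1 := by
  conv_lhs => unfold lisLen
  apply Finset.sup_le
  intro T hT
  obtain ⟨h1, h2⟩ := Finset.mem_filter.1 hT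
  have h1 := Finset.mem_powerset.1 h1
  have h3 : (T ∩ S).card ≤ lisLen S := lis_aux_le _ _ Finset.inter_subset_right (by
    intro p hp q hq
    exact h2 p (Finset.mem_inter.1 hp).1 q (Finset.mem_inter.1 hq).1)
  have h4 : (T \ S).card ≤ (S' \ S).card :=
    Finset.card_le_card (Finset.sdiff_subset_sdiff h1 (le_refl _))
  have h5 := Finset.card_sdiff_add_card_eq_card h
  have h6 := Finset.card_inter_add_card_sdiff T S
  omega

lemma lis_aux_half (S : Finset (ℕ × ℕ)) (hr : ∀ p ∈ S, ∀ q ∈ S, p.2 = q.2 → p = q)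
    (hav : ∀ p ∈ S, ∀ q ∈ S, ∀ r ∈ S, p.1 < q.1 → q.1 < r.1 → q.2 < p.2 → r.2 < q.2 → False) :
    S.card ≤ 2 * lisLen S := by
  classical
  have h1 := lis_aux_le S (S.filter fun q => ∃ p ∈ S, p.1 < q.1 ∧ q.2 < p.2)
    (Finset.filter_subset _ _) (by
      intro p hp q hq hpq
      obtain ⟨hp, w, hw, hw1, hw2⟩ := Finset.mem_filter.1 hp
      obtain ⟨hq, -⟩ := Finset.mem_filter.1 hq
      by_contra hlt
      rcases Nat.lt_or_eq_of_le (not_lt.1 hlt) with h | h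
      · exact hav w hw p hp q hq hw1 hpq hw2 h
      · have := hr _ hq _ hp h
        subst this
        omega)
  have h2 := lis_aux_le S (S.filter fun q => ¬ ∃ p ∈ S, p.1 < q.1 ∧ q.2 < p.2)
    (Finset.filter_subset _ _) (by
      intro p hp q hq hpq
      obtain ⟨hp, -⟩ := Finset.mem_filter.1 hp
      obtain ⟨hq, hw⟩ := Finset.mem_filter.1 hq
      by_contra hlt
      rcases Nat.lt_or_eq_of_le (not_lt.1 hlt) with h | h
      · exact hw ⟨p, hp, hpq, h⟩
      · have := hr _ hq _ hp h
        subst this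
        omega)
  have h3 := Finset.card_filter_add_card_filter_not (s := S)
    (fun q => ∃ p ∈ S, p.1 < q.1 ∧ q.2 < p.2)
  omega

lemma take_aux_mono (t : List Bool) (b : Bool) {i k : ℕ} (h : i ≤ k) :
    (t.take i).count b ≤ (t.take k).count b :=
  ((List.take_prefix_take_left h).sublist).count_le b

lemma rook_aux_card (n : ℕ) (t : List Bool) (ht : IsDyckPath n t)
    (R : Finset (ℕ × ℕ)) (hR : IsFullRookPlacement n t R) (i : ℕ) :
    (rectRooks n t R i).card + (t.take i).count false = (t.take i).count true := by
  classical
  obtain ⟨hlen, hct, hd⟩ := ht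
  obtain ⟨hb, hcol, hrow⟩ := hR
  have han : ∀ i, (t.take i).count true ≤ n := fun i =>
    ((List.take_sublist i t).count_le true).trans hct.le
  have hsn := (hd i).trans (han i)
  have hcoln : ∀ p ∈ R, 1 ≤ p.1 ∧ p.1 ≤ n ∧ 1 ≤ p.2 ∧ p.2 ≤ n := by
    intro p hp
    obtain ⟨h1, h2, k, h3, h4⟩ := hb p hp
    exact ⟨h1, h3.trans (han k), h2, by omega⟩
  have hA : (R.filter fun p => p.1 ≤ (t.take i).count true).card = (t.take i).count true := by
    have : ((R.filter fun p => p.1 ≤ (t.take i).count true).image Prod.fst)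
        = Finset.Icc 1 ((t.take i).count true) := by
      ext c
      simp only [Finset.mem_image, Finset.mem_filter, Finset.mem_Icc]
      constructor
      · rintro ⟨p, ⟨hp, hp2⟩, rfl⟩
        exact ⟨(hcoln p hp).1, hp2⟩
      · rintro ⟨h1, h2⟩
        obtain ⟨p, ⟨hp, rfl⟩, -⟩ := hcol c h1 (h2.trans (han i))
        exact ⟨p, ⟨hp, h2⟩, rfl⟩
    rw [← Finset.card_image_of_injOn (f := Prod.fst), this]
    · simp
    · intro p hp q hq hpq
      have hp := (Finset.mem_filter.1 hp).1
      have hq := (Finset.mem_filter.1 hq).1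
      exact (hcol p.1 (hcoln p hp).1 (hcoln p hp).2.1).unique ⟨hp, rfl⟩ ⟨hq, hpq.symm⟩
  have hB : (R.filter fun p => n < p.2 + (t.take i).count false).card
      = (t.take i).count false := by
    have : ((R.filter fun p => n < p.2 + (t.take i).count false).image Prod.snd)
        = Finset.Ioc (n - (t.take i).count false) n := by
      ext c
      simp only [Finset.mem_image, Finset.mem_filter, Finset.mem_Ioc]
      constructor
      · rintro ⟨p, ⟨hp, hp2⟩, rfl⟩
        exact ⟨by omega, (hcoln p hp).2.2.2⟩
      · rintro ⟨h1, h2⟩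
        obtain ⟨p, ⟨hp, rfl⟩, -⟩ := hrow c (by omega) h2
        exact ⟨p, ⟨hp, by omega⟩, rfl⟩
    rw [← Finset.card_image_of_injOn (f := Prod.snd), this]
    · simp only [Nat.card_Ioc]
      omega
    · intro p hp q hq hpq
      have hp := (Finset.mem_filter.1 hp).1
      have hq := (Finset.mem_filter.1 hq).1
      exact (hrow p.2 (hcoln p hp).2.2.1 (hcoln p hp).2.2.2).unique ⟨hp, rfl⟩ ⟨hq, hpq.symm⟩
  have hsplit := Finset.card_filter_add_card_filter_not
    (s := R.filter fun p => p.1 ≤ (t.take i).count true)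
    (fun p => p.2 + (t.take i).count false ≤ n)
  rw [Finset.filter_filter, Finset.filter_filter, hA] at hsplit
  have hE : (R.filter fun p => p.1 ≤ (t.take i).count true ∧ ¬ p.2 + (t.take i).count false ≤ n)
      = R.filter fun p => n < p.2 + (t.take i).count false := by
    apply Finset.filter_congr
    intro p hp
    constructor
    · rintro ⟨-, h⟩
      omega
    · intro h
      refine ⟨?_, by omega⟩
      obtain ⟨-, -, k, h3, h4⟩ := hb p hp
      rcases le_total k i with hk | hk
      · exact h3.trans (take_aux_mono t true hk)
      · have := take_aux_mono t false hk
        omega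
  rw [hE, hB] at hsplit
  exact hsplit

/-- For a `321`-avoiding full rook placement `(R,F)` on a board `F ∈ F_n`,
the sequence `j_i = 2ℓ_i − h_i` is the height sequence of a Dyck path lying weakly
below `D_F`. -/
theorem lis_sequence_is_dyck_below
    (n : ℕ) (t : List Bool) (ht : IsDyckPath n t)
    (R : Finset (ℕ × ℕ)) (hR : IsFullRookPlacement n t R)
    (hav : PlacementAvoids p321 n t R)
    (j : ℕ → ℤ) (hj : ∀ i, j i = 2 * (lisLen (rectRooks n t R i) : ℤ) - pathHeight t i) :
    j 0 = 0 ∧ j (2 * n) = 0 ∧ (∀ i, i < 2 * n → |j (i + 1) - j i| = 1) ∧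
    ∀ i, i ≤ 2 * n → 0 ≤ j i ∧ j i ≤ pathHeight t i := by
  have hcard := rook_aux_card n t ht R hR
  have hph : ∀ i, pathHeight t i = ((rectRooks n t R i).card : ℤ) := by
    intro i
    have := hcard i
    unfold pathHeight
    omega
  have hbd : ∀ i, i ≤ 2 * n → 0 ≤ j i ∧ j i ≤ pathHeight t i := by
    intro i hi
    have h1 := lis_aux_card (rectRooks n t R i)
    have h2 := lis_aux_half (rectRooks n t R i) (by
      intro p hp q hq hpq
      have hp := (Finset.mem_filter.1 hp).1
      have hq := (Finset.mem_filter.1 hq).1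
      obtain ⟨-, h2, k, h3, h4⟩ := hR.1 p hp
      exact (hR.2.2 p.2 h2 (by omega)).unique ⟨hp, rfl⟩ ⟨hq, hpq.symm⟩) (by
      intro p hp q hq r hr h1 h2 h3 h4
      refine hav ⟨i, hi, ![p, q, r], ?_, ?_, ?_⟩
      · intro a
        fin_cases a
        · exact Finset.mem_filter.1 hp
        · exact Finset.mem_filter.1 hq
        · exact Finset.mem_filter.1 hr
      · intro a b hab
        fin_cases a <;> fin_cases b <;> simp at hab ⊢ <;> omega
      · intro a b hab
        fin_cases a <;> fin_cases b <;> simp [p321] at hab ⊢ <;> omega)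
    rw [hj, hph]
    omega
  have hh0 : pathHeight t 0 = 0 := by simp [pathHeight]
  have hh1 : pathHeight t (2 * n) = 0 := by
    obtain ⟨hlen, hct, -⟩ := ht
    have := List.count_true_add_count_false t
    unfold pathHeight
    rw [← hlen, List.take_length]
    omega
  refine ⟨?_, ?_, ?_, hbd⟩
  · have := hbd 0 (by omega)
    omega
  · have := hbd (2 * n) le_rfl
    omega
  · intro i hi
    have hlt : i < t.length := by rw [ht.1]; exact hi
    have hc0 := hcard i
    have hc1 := hcard (i + 1)
    have htk : t.take (i + 1) = t.take i ++ [t[i]] := by simp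
    rw [hj, hj, hph, hph]
    cases hb : t[i] with
    | true =>
      rw [hb] at htk
      have e1 : (t.take (i + 1)).count true = (t.take i).count true + 1 := by simp [htk]
      have e2 : (t.take (i + 1)).count false = (t.take i).count false := by simp [htk]
      have hsub : rectRooks n t R i ⊆ rectRooks n t R (i + 1) := by
        intro p hp
        obtain ⟨hp, h1, h2⟩ := Finset.mem_filter.1 hp
        exact Finset.mem_filter.2 ⟨hp, by omega, by omega⟩
      have hcc : (rectRooks n t R (i + 1)).card = (rectRooks n t R i).card + 1 := by omega
      have m1 := lis_aux_mono _ _ hsub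
      have m2 := lis_aux_step _ _ hsub hcc
      rw [abs_eq (by norm_num)]
      omega
    | false =>
      rw [hb] at htk
      have e1 : (t.take (i + 1)).count true = (t.take i).count true := by simp [htk]
      have e2 : (t.take (i + 1)).count false = (t.take i).count false + 1 := by simp [htk]
      have hsub : rectRooks n t R (i + 1) ⊆ rectRooks n t R i := by
        intro p hp
        obtain ⟨hp, h1, h2⟩ := Finset.mem_filter.1 hp
        exact Finset.mem_filter.2 ⟨hp, by omega, by omega⟩
      have hcc : (rectRooks n t R i).card = (rectRooks n t R (i + 1)).card + 1 := by omega
      have m1 := lis_aux_mono _ _ hsub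
      have m2 := lis_aux_step _ _ hsub hcc
      rw [abs_eq (by norm_num)]
      omega
end

section
/- For all nonnegative integers n and k, the number of matchings in M_n^k(321) equals the number of pairs (D_0, D_1) of Dyck paths of semilength n+k such that D_0 lies weakly below D_1 and both D_0 and D_1 end with k consecutive south steps. (In the paper this is realized by an explicit bijection.) -/
namespace Mnk

def T (m : ℕ) (F : ℕ → ℕ → ℕ) (d c : ℕ) : ℕ :=
  ∑ j ∈ Finset.range (min m d + 1), F (d + m - 2 * j) (c + j)

def D (F : ℕ → ℕ → ℕ) (d c : ℕ) : ℕ :=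
  (if 1 ≤ d then F (d - 1) c else 0) + (if 1 ≤ c then F (d + 1) (c - 1) else 0)

def Phi : List ℕ → (ℕ → ℕ → ℕ) → ℕ
  | [], F => F 0 0
  | m :: β, F => Phi β (T m F)

def W : ℕ → ℕ → ℕ → ℕ
  | 0 => fun d c => if c = 0 then (if d = 0 then 1 else 0) else 0
  | N + 1 => fun d c => T 1 (W N) d c + D (W N) d c

lemma T_one (F : ℕ → ℕ → ℕ) (d c : ℕ) :
    T 1 F d c = F (d + 1) c + (if 1 ≤ d then F (d - 1) (c + 1) else 0) := by
  unfold T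
  rcases d with _ | d
  · simp
  · have : min 1 (d + 1) + 1 = 2 := by omega
    rw [this]
    simp [Finset.sum_range_succ]

lemma T_add (m : ℕ) (F G : ℕ → ℕ → ℕ) :
    T m (fun d c => F d c + G d c) = fun d c => T m F d c + T m G d c := by
  funext d c
  simp [T, Finset.sum_add_distrib]

lemma Phi_add (β : List ℕ) : ∀ (F G : ℕ → ℕ → ℕ),
    Phi β (fun d c => F d c + G d c) = Phi β F + Phi β G := by
  induction β with
  | nil => intro F G; rfl
  | cons m β ih => intro F G; simp only [Phi]; rw [T_add, ih]

lemma T_comm_one (m : ℕ) (F : ℕ → ℕ → ℕ) : T 1 (T m F) = T m (T 1 F) := by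
  funext d c
  rw [T_one]
  have hR : T m (T 1 F) d c = ∑ j ∈ Finset.range (min m d + 1), F (d + m - 2 * j + 1) (c + j)
      + ∑ j ∈ Finset.range (min m d + 1),
        (if 1 ≤ d + m - 2 * j then F (d + m - 2 * j - 1) (c + j + 1) else 0) := by
    rw [← Finset.sum_add_distrib]
    unfold T
    exact Finset.sum_congr rfl fun j _ => T_one F _ _
  rw [hR]
  rcases lt_trichotomy m d with h | h | h
  · rw [if_pos (by omega)]
    unfold T
    have e1 : min m (d + 1) = m := by omega
    have e2 : min m (d - 1) = m := by omega
    have e3 : min m d = m := by omega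
    rw [e1, e2, e3]
    congr 1
    · refine Finset.sum_congr rfl fun j hj => ?_
      simp only [Finset.mem_range] at hj
      congr 1; omega
    · refine Finset.sum_congr rfl fun j hj => ?_
      simp only [Finset.mem_range] at hj
      rw [if_pos (by omega)]
      congr 1 <;> omega
  · subst h
    unfold T
    have e1 : min m (m + 1) = m := by omega
    have e2 : min m (m - 1) = m - 1 := by omega
    have e3 : min m m = m := by omega
    rw [e1, e2, e3]
    congr 1
    · refine Finset.sum_congr rfl fun j hj => ?_
      simp only [Finset.mem_range] at hj
      congr 1; omega
    · rw [Finset.sum_range_succ (n := m) (f := fun j => if 1 ≤ m + m - 2 * j then F (m + m - 2 * j - 1) (c + j + 1) else 0),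
        if_neg (by omega : ¬ 1 ≤ m + m - 2 * m)]
      rcases m with _ | m
      · simp
      · rw [if_pos (by omega)]
        have : m + 1 - 1 + 1 = m + 1 := by omega
        rw [this, add_zero]
        refine Finset.sum_congr rfl fun j hj => ?_
        simp only [Finset.mem_range] at hj
        rw [if_pos (by omega)]
        congr 1 <;> omega
  · unfold T
    have e1 : min m (d + 1) = d + 1 := by omega
    have e2 : min m (d - 1) = d - 1 := by omega
    have e3 : min m d = d := by omega
    rw [e1, e2, e3]
    rw [Finset.sum_range_succ, Finset.sum_range_succ (n := d) (f := fun j => if 1 ≤ d + m - 2 * j then F (d + m - 2 * j - 1) (c + j + 1) else 0)]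
    have A : (∑ j ∈ Finset.range (d + 1), F (d + 1 + m - 2 * j) (c + j))
      = ∑ j ∈ Finset.range (d + 1), F (d + m - 2 * j + 1) (c + j) := by
      refine Finset.sum_congr rfl fun j hj => ?_
      simp only [Finset.mem_range] at hj
      congr 1; omega
    have B : (if 1 ≤ d then ∑ j ∈ Finset.range (d - 1 + 1), F (d - 1 + m - 2 * j) (c + 1 + j) else 0)
      = ∑ j ∈ Finset.range d, if 1 ≤ d + m - 2 * j then F (d + m - 2 * j - 1) (c + j + 1) else 0 := by
      rcases d with _ | d
      · simp
      · rw [if_pos (by omega)]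
        have : d + 1 - 1 + 1 = d + 1 := by omega
        rw [this]
        refine Finset.sum_congr rfl fun j hj => ?_
        simp only [Finset.mem_range] at hj
        rw [if_pos (by omega)]
        congr 1 <;> omega
    have C : F (d + 1 + m - 2 * (d + 1)) (c + (d + 1)) =
        if 1 ≤ d + m - 2 * d then F (d + m - 2 * d - 1) (c + d + 1) else 0 := by
      rw [if_pos (by omega)]
      congr 1; omega
    rw [A, B, C]; omega

lemma T_D (m : ℕ) (F : ℕ → ℕ → ℕ) : T m (D F) =
    fun d c => D (T m F) d c + (if c = 0 then (if 1 ≤ m then T (m - 1) F d 0 else 0) else 0) := by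
  funext d c
  have hR : T m (D F) d c = ∑ j ∈ Finset.range (min m d + 1),
        (if 1 ≤ d + m - 2 * j then F (d + m - 2 * j - 1) (c + j) else 0)
      + ∑ j ∈ Finset.range (min m d + 1),
        (if 1 ≤ c + j then F (d + m - 2 * j + 1) (c + j - 1) else 0) := by
    rw [← Finset.sum_add_distrib]
    rfl
  -- first sum
  have h1 : ∀ c, (∑ j ∈ Finset.range (min m d + 1),
        (if 1 ≤ d + m - 2 * j then F (d + m - 2 * j - 1) (c + j) else 0)) =
      if m = d then ∑ j ∈ Finset.range (min m d), F (d + m - 1 - 2 * j) (c + j)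
      else ∑ j ∈ Finset.range (min m d + 1), F (d + m - 1 - 2 * j) (c + j) := by
    intro c
    split_ifs with h
    · subst h
      rw [Finset.sum_range_succ, if_neg (by omega), add_zero]
      refine Finset.sum_congr rfl fun j hj => ?_
      simp only [Finset.mem_range] at hj
      rw [if_pos (by omega)]
      congr 1; omega
    · refine Finset.sum_congr rfl fun j hj => ?_
      simp only [Finset.mem_range] at hj
      rw [if_pos (by omega)]
      congr 1; omega
  have h2 : (if 1 ≤ d then T m F (d - 1) c else 0) =
      if m < d then ∑ j ∈ Finset.range (min m d + 1), F (d + m - 1 - 2 * j) (c + j)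
      else ∑ j ∈ Finset.range (min m d), F (d + m - 1 - 2 * j) (c + j) := by
    unfold T
    rcases d with _ | d
    · simp
    · rw [if_pos (by omega)]
      split_ifs with h
      · have : min m (d + 1 - 1) + 1 = min m (d + 1) + 1 := by omega
        rw [this]
        refine Finset.sum_congr rfl fun j hj => ?_
        congr 1; omega
      · have : min m (d + 1 - 1) + 1 = min m (d + 1) := by omega
        rw [this]
        refine Finset.sum_congr rfl fun j hj => ?_
        congr 1; omega
  rw [hR, h1]
  conv_rhs => unfold D
  rw [h2]
  rcases c with _ | c
  · rw [if_neg (by omega : ¬ 1 ≤ 0)]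
    simp only [if_true]
    rw [Finset.sum_range_succ' (n := min m d) (f := fun j => if 1 ≤ 0 + j then F (d + m - 2 * j + 1) (0 + j - 1) else 0)]
    rw [if_neg (by omega : ¬ 1 ≤ 0 + 0), add_zero, add_zero]
    have h3 : (∑ j ∈ Finset.range (min m d),
        if 1 ≤ 0 + (j + 1) then F (d + m - 2 * (j + 1) + 1) (0 + (j + 1) - 1) else 0) =
        ∑ j ∈ Finset.range (min m d), F (d + m - 1 - 2 * j) (0 + j) := by
      refine Finset.sum_congr rfl fun j hj => ?_
      simp only [Finset.mem_range] at hj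
      rw [if_pos (by omega)]
      congr 1 <;> omega
    rw [h3]
    have h4 : (if 1 ≤ m then T (m - 1) F d 0 else 0) =
      if m ≤ d then ∑ j ∈ Finset.range (min m d), F (d + m - 1 - 2 * j) (0 + j)
      else ∑ j ∈ Finset.range (min m d + 1), F (d + m - 1 - 2 * j) (0 + j) := by
      unfold T
      rcases m with _ | m
      · simp
      · rw [if_pos (by omega)]
        split_ifs with h
        · have : min (m + 1 - 1) d + 1 = min (m + 1) d := by omega
          rw [this]
          refine Finset.sum_congr rfl fun j hj => ?_
          congr 1
        · have : min (m + 1 - 1) d + 1 = min (m + 1) d + 1 := by omega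
          rw [this]
          refine Finset.sum_congr rfl fun j hj => ?_
          congr 1
    rw [h4]
    split_ifs <;> omega
  · rw [if_pos (by omega : 1 ≤ c + 1), if_neg (by omega : ¬ c + 1 = 0), add_zero]
    have h5 : (∑ j ∈ Finset.range (min m d + 1),
        if 1 ≤ c + 1 + j then F (d + m - 2 * j + 1) (c + 1 + j - 1) else 0)
        = ∑ j ∈ Finset.range (min m d + 1), F (d + 1 + m - 2 * j) (c + j) := by
      refine Finset.sum_congr rfl fun j hj => ?_
      simp only [Finset.mem_range] at hj
      rw [if_pos (by omega)]
      congr 1 <;> omega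
    have h6 : T m F (d + 1) (c + 1 - 1) = (∑ j ∈ Finset.range (min m d + 1), F (d + 1 + m - 2 * j) (c + j))
       + if d < m then F (d + m - 1 - 2 * d) (c + 1 + d) else 0 := by
      unfold T
      split_ifs with h
      · have : min m (d + 1) + 1 = min m d + 1 + 1 := by omega
        rw [this, Finset.sum_range_succ]
        have e : min m d = d := by omega
        rw [e]
        congr 2 <;> omega
      · have : min m (d + 1) + 1 = min m d + 1 := by omega
        rw [this, add_zero]
        rfl
    rw [h5, h6, Finset.sum_range_succ (n := min m d) (f := fun j => F (d + m - 1 - 2 * j) (c + 1 + j))]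
    rcases lt_trichotomy m d with h | h | h
    · rw [if_neg (by omega), if_pos h, if_neg (by omega)]; omega
    · rw [if_pos h, if_neg (by omega), if_neg (by omega)]; omega
    · rw [if_neg (by omega), if_neg (by omega), if_pos h]
      have e : min m d = d := by omega
      rw [e]; omega

lemma T_ind (m : ℕ) (G : ℕ → ℕ) : T m (fun d c => if c = 0 then G d else 0) =
    fun d c => if c = 0 then G (d + m) else 0 := by
  funext d c
  unfold T
  rw [Finset.sum_range_succ']
  simp

lemma Phi_ind (β : List ℕ) : ∀ G : ℕ → ℕ,
    Phi β (fun d c => if c = 0 then G d else 0) = G β.sum := by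
  induction β with
  | nil => intro G; simp [Phi]
  | cons m β ih =>
    intro G
    simp only [Phi]
    rw [T_ind, ih (fun d => G (d + m))]
    simp [add_comm]

lemma Phi_pair (F : ℕ → ℕ → ℕ) (a b : ℕ) : Phi [a, b] F = T a F b 0 := by
  simp [Phi, T]

lemma Phi_cons_D (m : ℕ) (β : List ℕ) (F : ℕ → ℕ → ℕ) :
    Phi (m :: β) (D F) = (if 1 ≤ m then Phi [m - 1, β.sum] F else 0) + Phi β (D (T m F)) := by
  simp only [Phi_pair]
  conv_lhs => rw [Phi, T_D, Phi_add]
  rw [Phi_ind β (fun d => if 1 ≤ m then T (m - 1) F d 0 else 0)]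
  omega

lemma Phi_append (β γ : List ℕ) : ∀ F, Phi (β ++ γ) F = Phi γ (β.foldl (fun F m => T m F) F) := by
  induction β with
  | nil => intro F; rfl
  | cons m β ih => intro F; simp [Phi, ih]

lemma Phi_snoc_one (β : List ℕ) : ∀ F, Phi (β ++ [1]) F = Phi β (T 1 F) := by
  induction β with
  | nil => intro F; rfl
  | cons m β ih => intro F; simp only [List.cons_append, Phi]; rw [ih, T_comm_one]

lemma Phi_succ (β : List ℕ) (N : ℕ) : Phi β (W (N + 1)) = Phi (β ++ [1]) (W N) + Phi β (D (W N)) := by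
  rw [Phi_snoc_one, ← Phi_add]; rfl

end Mnk
namespace Mnk

structure Cfg (N s : ℕ) (B : List (List ℕ)) (M : Finset (ℕ × ℕ)) : Prop where
  rng : ∀ a x, (a, x) ∈ M → 1 ≤ a ∧ a ≤ N ∧ a < x ∧ (x ≤ N ∨ x ∈ B.flatten)
  inj : ∀ a x b y, (a, x) ∈ M → (b, y) ∈ M → a ≠ y ∧ (a = b ↔ x = y)
  cov : ∀ x ∈ B.flatten, ∃ a, (a, x) ∈ M
  fx : (fixedPts N M).card = s
  nc3 : ∀ a b c x y z, (a, x) ∈ M → (b, y) ∈ M → (c, z) ∈ M →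
    a < b → b < c → c < x → x < y → y < z → False
  nc2 : ∀ a b c x y, (a, x) ∈ M → (b, y) ∈ M → a < b → b < c → c < x → x < y →
    c ∈ fixedPts N M → False
  blk : ∀ l ∈ B, ∀ x ∈ l, ∀ y ∈ l, x < y → ∀ a b, (a, x) ∈ M → (b, y) ∈ M → a < b → False

lemma mem_fixedPts (N : ℕ) (M : Finset (ℕ × ℕ)) (x : ℕ) :
    x ∈ fixedPts N M ↔ (1 ≤ x ∧ x ≤ N) ∧ (∀ y, (x, y) ∉ M) ∧ ∀ y, (y, x) ∉ M := by
  unfold fixedPts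
  rw [Finset.mem_filter, Finset.mem_Icc]
  refine and_congr_right fun _ => ⟨fun h => ⟨fun y hy => (h _ hy).1 rfl, fun y hy => (h _ hy).2 rfl⟩,
    fun h p hp => ⟨?_, ?_⟩⟩
  · rintro rfl; exact h.1 p.2 hp
  · rintro rfl; exact h.2 p.1 hp

/-- closer case -/
lemma cfg_closer (N s : ℕ) (B : List (List ℕ)) (hB : ∀ x ∈ B.flatten, N + 1 < x)
    (M : Finset (ℕ × ℕ)) :
    (Cfg (N + 1) s B M ∧ ∃ p, (p, N + 1) ∈ M) ↔ Cfg N s (B ++ [[N + 1]]) M := by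
  have key : (∃ p, (p, N + 1) ∈ M) → fixedPts (N + 1) M = fixedPts N M := by
    rintro ⟨p, hp⟩
    ext x
    simp only [mem_fixedPts]
    constructor
    · rintro ⟨⟨h1, h2⟩, h3, h4⟩
      have : x ≠ N + 1 := by rintro rfl; exact h4 _ hp
      exact ⟨⟨h1, by omega⟩, h3, h4⟩
    · rintro ⟨⟨h1, h2⟩, h3, h4⟩
      exact ⟨⟨h1, by omega⟩, h3, h4⟩
  constructor
  · rintro ⟨h, hp⟩
    have hk := key hp
    obtain ⟨p, hp⟩ := hp
    refine ⟨?_, h.inj, ?_, ?_, h.nc3, ?_, ?_⟩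
    · intro a x hax
      obtain ⟨h1, h2, h3, h4⟩ := h.rng a x hax
      have := (h.inj a x p _ hax hp).1
      refine ⟨h1, by omega, h3, ?_⟩
      simp only [List.flatten_append, List.mem_append]
      rcases h4 with h4 | h4
      · rcases Nat.lt_or_ge N x with h5 | h5
        · right; right; have : x = N + 1 := by omega
          simp [this]
        · left; exact h5
      · right; left; exact h4
    · intro x hx
      simp only [List.flatten_append, List.mem_append] at hx
      rcases hx with hx | hx
      · exact h.cov x hx
      · simp at hx; subst hx; exact ⟨p, hp⟩
    · rw [← hk]; exact h.fx
    · rw [← hk]; exact h.nc2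
    · intro l hl
      rw [List.mem_append] at hl
      rcases hl with hl | hl
      · exact h.blk l hl
      · simp at hl; subst hl
        intro x hx y hy hxy
        simp at hx hy; omega
  · intro h
    have hp : ∃ p, (p, N + 1) ∈ M := h.cov (N + 1) (by simp)
    have hk := key hp
    refine ⟨⟨?_, h.inj, ?_, ?_, h.nc3, ?_, ?_⟩, hp⟩
    · intro a x hax
      obtain ⟨h1, h2, h3, h4⟩ := h.rng a x hax
      refine ⟨h1, by omega, h3, ?_⟩
      simp only [List.flatten_append, List.mem_append] at h4
      rcases h4 with h4 | h4 | h4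
      · left; omega
      · right; exact h4
      · simp at h4; left; omega
    · intro x hx
      exact h.cov x (by simp only [List.flatten_append, List.mem_append]; exact Or.inl hx)
    · rw [hk]; exact h.fx
    · rw [hk]; exact h.nc2
    · intro l hl
      exact h.blk l (by simp [hl])

/-- fixed case -/
lemma cfg_fixed (N s : ℕ) (B : List (List ℕ)) (hB : ∀ x ∈ B.flatten, N + 1 < x)
    (M : Finset (ℕ × ℕ)) :
    (Cfg (N + 1) s B M ∧ N + 1 ∈ fixedPts (N + 1) M) ↔ (1 ≤ s ∧ Cfg N (s - 1) [B.flatten] M) := by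
  have key : N + 1 ∈ fixedPts (N + 1) M → fixedPts (N + 1) M = insert (N + 1) (fixedPts N M) := by
    intro hp
    ext x
    rw [Finset.mem_insert]
    constructor
    · intro h
      by_cases hx : x = N + 1
      · left; exact hx
      · right
        rw [mem_fixedPts] at h ⊢
        exact ⟨⟨h.1.1, by omega⟩, h.2⟩
    · rintro (rfl | h)
      · exact hp
      · rw [mem_fixedPts] at h ⊢
        exact ⟨⟨h.1.1, by omega⟩, h.2⟩
  have hni : N + 1 ∉ fixedPts N M := by rw [mem_fixedPts]; omega
  have hfl : [B.flatten].flatten = B.flatten := by simp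
  constructor
  · rintro ⟨h, hp⟩
    have hk := key hp
    have hc := h.fx
    rw [hk, Finset.card_insert_of_notMem hni] at hc
    refine ⟨by omega, ⟨?_, h.inj, ?_, by omega, h.nc3, ?_, ?_⟩⟩
    · intro a x hax
      obtain ⟨h1, h2, h3, h4⟩ := h.rng a x hax
      rw [mem_fixedPts] at hp
      have e1 : a ≠ N + 1 := by rintro rfl; exact hp.2.1 _ hax
      have e2 : x ≠ N + 1 := by rintro rfl; exact hp.2.2 _ hax
      rw [hfl]
      refine ⟨h1, by omega, h3, ?_⟩
      rcases h4 with h4 | h4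
      · left; omega
      · right; exact h4
    · rw [hfl]; exact h.cov
    · intro a b c x y h1 h2 h3 h4 h5 h6 h7
      exact h.nc2 a b c x y h1 h2 h3 h4 h5 h6 (by rw [hk]; exact Finset.mem_insert_of_mem h7)
    · intro l hl
      simp only [List.mem_singleton] at hl; subst hl
      intro x hx y hy hxy a b ha hb hab
      have := hB x hx
      have h2 := (h.rng b y hb).2.1
      have e : b ≠ N + 1 := by
        rintro rfl
        rw [mem_fixedPts] at hp
        exact hp.2.1 _ hb
      exact h.nc2 a b (N + 1) x y ha hb hab (by omega) this hxy hp
  · rintro ⟨hs, h⟩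
    have hrng := h.rng
    rw [hfl] at hrng
    have hp : N + 1 ∈ fixedPts (N + 1) M := by
      rw [mem_fixedPts]
      refine ⟨by omega, fun y hy => ?_, fun y hy => ?_⟩
      · have := (hrng _ _ hy).2.1; omega
      · rcases (hrng _ _ hy).2.2.2 with h | h
        · omega
        · have := hB _ h; omega
    have hk := key hp
    have hc := h.fx
    refine ⟨⟨?_, h.inj, ?_, ?_, h.nc3, ?_, ?_⟩, hp⟩
    · intro a x hax
      obtain ⟨h1, h2, h3, h4⟩ := hrng a x hax
      refine ⟨h1, by omega, h3, ?_⟩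
      rcases h4 with h4 | h4
      · left; omega
      · right; exact h4
    · have := h.cov; rw [hfl] at this; exact this
    · rw [hk, Finset.card_insert_of_notMem hni]; omega
    · intro a b c x y h1 h2 h3 h4 h5 h6 h7
      rw [hk, Finset.mem_insert] at h7
      rcases h7 with h7 | h7
      · subst h7
        have hx : x ∈ B.flatten := by
          rcases (hrng _ _ h1).2.2.2 with h | h
          · omega
          · exact h
        have hy : y ∈ B.flatten := by
          rcases (hrng _ _ h2).2.2.2 with h | h
          · omega
          · exact h
        exact h.blk B.flatten (by simp) x hx y hy h6 a b h1 h2 h3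
      · exact h.nc2 a b c x y h1 h2 h3 h4 h5 h6 h7
    · intro l hl x hx y hy
      exact h.blk B.flatten (by simp) x (List.mem_flatten.2 ⟨l, hl, hx⟩) y
        (List.mem_flatten.2 ⟨l, hl, hy⟩)

lemma cfg_open_fixed (N j : ℕ) (hj : N + 1 < j) (M : Finset (ℕ × ℕ)) (hM : (N + 1, j) ∉ M)
    (hr : ∀ a x, (a, x) ∈ M → a ≤ N) :
    fixedPts (N + 1) (insert (N + 1, j) M) = fixedPts N M := by
  ext x
  simp only [mem_fixedPts, Finset.mem_insert, Prod.mk.injEq, not_or, not_and]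
  constructor
  · rintro ⟨h1, h2, h3⟩
    have : x ≠ N + 1 := fun h => (h2 j).1 h rfl
    exact ⟨by omega, fun y => (h2 y).2, fun y => (h3 y).2⟩
  · rintro ⟨h1, h2, h3⟩
    exact ⟨by omega, fun y => ⟨by omega, h2 y⟩, fun y => ⟨by omega, h3 y⟩⟩

/-- opener case -/
lemma cfg_opener1 (N s : ℕ) (L : List (List ℕ)) (b : List ℕ) (j : ℕ) (R : List (List ℕ))
    (hB : ∀ x ∈ (L ++ (b ++ [j]) :: R).flatten, N + 1 < x)
    (hs : (L ++ (b ++ [j]) :: R).flatten.Pairwise (· > ·))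
    (M : Finset (ℕ × ℕ)) (hM : (N + 1, j) ∉ M) (h : Cfg (N + 1) s (L ++ (b ++ [j]) :: R) (insert (N + 1, j) M)) :
    Cfg N s (L ++ [b, R.flatten]) M := by
  simp only [List.flatten_append, List.flatten_cons, List.mem_append, List.pairwise_append,
    List.mem_singleton] at hB hs
  have hj := hB j (by simp)
  have hin : ∀ {q}, q ∈ M → q ∈ insert (N + 1, j) M := fun hq => Finset.mem_insert_of_mem hq
  have hj0 : (N + 1, j) ∈ insert (N + 1, j) M := Finset.mem_insert_self _ _
  have hne : ∀ a x, (a, x) ∈ M → a ≠ N + 1 ∧ x ≠ j := by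
    intro a x hax
    have h2 := (h.inj a x _ _ (hin hax) hj0).2
    constructor
    · rintro rfl
      have := h2.1 rfl; subst this; exact hM hax
    · rintro rfl
      have := h2.2 rfl; subst this; exact hM hax
  have hk := cfg_open_fixed N j hj M hM (fun a x hax => by
    have := (hne a x hax).1
    have := (h.rng a x (hin hax)).2.1
    omega)
  have hfx := h.fx
  rw [hk] at hfx
  refine ⟨?_, fun a x b y h1 h2 => h.inj a x b y (hin h1) (hin h2), ?_, hfx,
    fun a b c x y z h1 h2 h3 => h.nc3 a b c x y z (hin h1) (hin h2) (hin h3), ?_, ?_⟩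
  · intro a x hax
    obtain ⟨e1, e2⟩ := hne a x hax
    obtain ⟨h1, h2, h3, h4⟩ := h.rng a x (hin hax)
    have h5 := (h.inj _ _ a x hj0 (hin hax)).1
    refine ⟨h1, by omega, h3, ?_⟩
    rcases h4 with h4 | h4
    · left; omega
    · right
      simp only [List.flatten_append, List.flatten_cons, List.mem_append, List.mem_singleton] at h4 ⊢
      simp only [List.flatten_nil, List.not_mem_nil, or_false]
      tauto
  · intro x hx
    have hx2 : x ≠ j := by
      rintro rfl
      simp only [List.flatten_append, List.flatten_cons, List.mem_append, List.flatten_nil, List.not_mem_nil, or_false] at hx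
      rcases hx with hx | hx | hx
      · have := hs.2.2 x hx x (by simp); omega
      · have := hs.2.1.1.2.2 x hx x rfl; omega
      · have := hs.2.1.2.2 x (by simp) x hx; omega
    obtain ⟨a, ha⟩ := h.cov x (by
      simp only [List.flatten_append, List.flatten_cons, List.mem_append, List.mem_singleton,
        List.flatten_nil, List.not_mem_nil, or_false] at hx ⊢
      tauto)
    rw [Finset.mem_insert] at ha
    rcases ha with ha | ha
    · simp only [Prod.mk.injEq] at ha; exact absurd ha.2 hx2
    · exact ⟨a, ha⟩
  · intro a b c x y h1 h2 h3 h4 h5 h6 h7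
    exact h.nc2 a b c x y (hin h1) (hin h2) h3 h4 h5 h6 (by rw [hk]; exact h7)
  · intro l hl
    simp only [List.mem_append, List.mem_cons, List.not_mem_nil, or_false] at hl
    rcases hl with hl | rfl | rfl
    · intro x hx y hy hxy a c h1 h2
      exact h.blk l (by simp [hl]) x hx y hy hxy a c (hin h1) (hin h2)
    · intro x hx y hy hxy a c h1 h2
      exact h.blk (l ++ [j]) (by simp) x (by simp [hx]) y (by simp [hy]) hxy a c (hin h1) (hin h2)
    · intro x hx y hy hxy a c h1 h2 h3
      have e1 := (hne _ _ h2).1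
      have e2 := (h.rng _ _ (hin h2)).2.1
      have e3 := hB x (by tauto)
      have e4 := hs.2.1.2.2 j (by simp) y hy
      exact h.nc3 a c (N + 1) x y j (hin h1) (hin h2) hj0 h3 (by omega) e3 hxy e4

lemma cfg_opener2 (N s : ℕ) (L : List (List ℕ)) (b : List ℕ) (j : ℕ) (R : List (List ℕ))
    (hB : ∀ x ∈ (L ++ (b ++ [j]) :: R).flatten, N + 1 < x)
    (hs : (L ++ (b ++ [j]) :: R).flatten.Pairwise (· > ·))
    (M : Finset (ℕ × ℕ)) (h : Cfg N s (L ++ [b, R.flatten]) M) :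
    (N + 1, j) ∉ M ∧ Cfg (N + 1) s (L ++ (b ++ [j]) :: R) (insert (N + 1, j) M) := by
  simp only [List.flatten_append, List.flatten_cons, List.mem_append, List.pairwise_append,
    List.mem_singleton] at hB hs
  have hj := hB j (by simp)
  have hrng : ∀ a x, (a, x) ∈ M → 1 ≤ a ∧ a ≤ N ∧ a < x ∧
      (x ≤ N ∨ x ∈ L.flatten ∨ x ∈ b ∨ x ∈ R.flatten) := by
    intro a x hax
    have := h.rng a x hax
    simpa only [List.flatten_append, List.flatten_cons, List.mem_append, List.flatten_nil,
      List.not_mem_nil, or_false] using this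
  have hM : (N + 1, j) ∉ M := fun hm => by
    have := (hrng _ _ hm).2.1; omega
  have hxj : ∀ x, (x ∈ L.flatten ∨ x ∈ b ∨ x ∈ R.flatten) → x ≠ j ∧ (x < j → x ∈ R.flatten) ∧ N + 1 < x := by
    rintro x (hx | hx | hx)
    · have := hs.2.2 x hx j (by simp)
      exact ⟨by omega, by omega, hB x (by tauto)⟩
    · have := hs.2.1.1.2.2 x hx j rfl
      exact ⟨by omega, by omega, hB x (by tauto)⟩
    · have := hs.2.1.2.2 j (by simp) x hx
      exact ⟨by omega, fun _ => hx, hB x (by tauto)⟩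
  have hx' : ∀ a x, (a, x) ∈ M → x ≠ j ∧ x ≠ N + 1 ∧ (N < x → x < j → x ∈ R.flatten) := by
    intro a x hax
    rcases (hrng a x hax).2.2.2 with h1 | h1
    · exact ⟨by omega, by omega, by omega⟩
    · have := hxj x h1
      exact ⟨this.1, by omega, fun _ => this.2.1⟩
  have hk := cfg_open_fixed N j hj M hM (fun a x hax => (hrng a x hax).2.1)
  refine ⟨hM, ?_, ?_, ?_, by rw [hk]; exact h.fx, ?_, ?_, ?_⟩
  · intro a x hax
    simp only [Finset.mem_insert, Prod.mk.injEq] at hax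
    simp only [List.flatten_append, List.flatten_cons, List.mem_append, List.mem_singleton]
    rcases hax with ⟨rfl, rfl⟩ | hax
    · exact ⟨by omega, by omega, by omega, by simp⟩
    · have := hrng a x hax
      refine ⟨by omega, by omega, by omega, ?_⟩
      rcases this.2.2.2 with h1 | h1
      · left; omega
      · right; tauto
  · intro a x c y h1 h2
    simp only [Finset.mem_insert, Prod.mk.injEq] at h1 h2
    rcases h1 with ⟨rfl, rfl⟩ | h1 <;> rcases h2 with ⟨rfl, rfl⟩ | h2
    · exact ⟨by omega, by simp⟩
    · have := hrng _ _ h2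
      have := hx' _ _ h2
      exact ⟨by omega, by omega⟩
    · have := hrng _ _ h1
      have := hx' _ _ h1
      exact ⟨by omega, by omega⟩
    · exact h.inj _ _ _ _ h1 h2
  · intro x hx
    simp only [List.flatten_append, List.flatten_cons, List.mem_append, List.mem_singleton] at hx
    by_cases hxj : x = j
    · subst hxj; exact ⟨N + 1, Finset.mem_insert_self _ _⟩
    · obtain ⟨a, ha⟩ := h.cov x (by
        simp only [List.flatten_append, List.flatten_cons, List.mem_append, List.flatten_nil,
          List.not_mem_nil, or_false]
        tauto)
      exact ⟨a, Finset.mem_insert_of_mem ha⟩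
  · intro a c e x y z h1 h2 h3 h4 h5 h6 h7 h8
    simp only [Finset.mem_insert, Prod.mk.injEq] at h1 h2 h3
    have g3 : e ≤ N + 1 := by
      rcases h3 with h3 | h3
      · omega
      · have := hrng _ _ h3; omega
    replace h1 : (a, x) ∈ M := by
      rcases h1 with h1 | h1
      · omega
      · exact h1
    replace h2 : (c, y) ∈ M := by
      rcases h2 with h2 | h2
      · omega
      · exact h2
    rcases h3 with ⟨rfl, rfl⟩ | h3
    · have k1 := (hx' _ _ h1).2.2 (by omega) (by omega)
      have k2 := (hx' _ _ h2).2.2 (by omega) (by omega)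
      exact h.blk R.flatten (by simp) x k1 y k2 h7 a c h1 h2 h4
    · exact h.nc3 a c e x y z h1 h2 h3 h4 h5 h6 h7 h8
  · intro a c e x y h1 h2 h3 h4 h5 h6 h7
    rw [hk] at h7
    have g := ((mem_fixedPts _ _ _).1 h7).1
    simp only [Finset.mem_insert, Prod.mk.injEq] at h1 h2
    replace h1 : (a, x) ∈ M := by
      rcases h1 with h1 | h1
      · omega
      · exact h1
    replace h2 : (c, y) ∈ M := by
      rcases h2 with h2 | h2
      · omega
      · exact h2
    exact h.nc2 a c e x y h1 h2 h3 h4 h5 h6 h7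
  · intro l hl x hx y hy hxy a c h1 h2 h3
    simp only [Finset.mem_insert, Prod.mk.injEq] at h1 h2
    have g3 : c ≤ N + 1 := by
      rcases h2 with h2 | h2
      · omega
      · have := hrng _ _ h2; omega
    replace h1 : (a, x) ∈ M := by
      rcases h1 with h1 | h1
      · omega
      · exact h1
    simp only [List.mem_append, List.mem_cons] at hl
    rcases h2 with ⟨rfl, rfl⟩ | h2
    · rcases hl with hl | rfl | hl
      · have := hs.2.2 y (List.mem_flatten.2 ⟨l, hl, hy⟩) y (by simp); omega
      · simp only [List.mem_append, List.mem_singleton] at hx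
        rcases hx with hx | hx
        · have := hs.2.1.1.2.2 x hx y rfl; omega
        · omega
      · have := hs.2.1.2.2 y (by simp) y (List.mem_flatten.2 ⟨l, hl, hy⟩); omega
    · rcases hl with hl | rfl | hl
      · exact h.blk l (by simp [hl]) x hx y hy hxy a c h1 h2 h3
      · simp only [List.mem_append, List.mem_singleton] at hx hy
        have e1 := (hx' _ _ h1).1
        have e2 := (hx' _ _ h2).1
        exact h.blk b (by simp) x (by tauto) y (by tauto) hxy a c h1 h2 h3
      · exact h.blk R.flatten (by simp) x (List.mem_flatten.2 ⟨l, hl, hx⟩) y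
          (List.mem_flatten.2 ⟨l, hl, hy⟩) hxy a c h1 h2 h3

lemma cfg_not_last (N s : ℕ) (L : List (List ℕ)) (b : List ℕ) (j i : ℕ) (R : List (List ℕ))
    (hs : (L ++ (b ++ [j]) :: R).flatten.Pairwise (· > ·)) (hi : i ∈ b)
    (M : Finset (ℕ × ℕ)) (h : Cfg (N + 1) s (L ++ (b ++ [j]) :: R) M) : (N + 1, i) ∉ M := by
  intro hm
  simp only [List.flatten_append, List.flatten_cons, List.pairwise_append,
    List.mem_singleton] at hs
  have hij := hs.2.1.1.2.2 i hi j rfl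
  obtain ⟨a, ha⟩ := h.cov j (by simp)
  have h1 := (h.rng _ _ ha).2.1
  have h2 := (h.inj _ _ _ _ ha hm).2
  exact h.blk (b ++ [j]) (by simp) j (by simp) i (by simp [hi]) hij a (N + 1) ha hm (by omega)

end Mnk
namespace Mnk

lemma phi_zero (s : ℕ) (β : List ℕ) : Phi (s :: β) (W 0) = if s + β.sum = 0 then 1 else 0 := by
  have := Phi_ind (s :: β) (fun d => if d = 0 then 1 else 0)
  rw [List.sum_cons] at this
  exact this

lemma cfg_zero (s : ℕ) (B : List (List ℕ)) :
    {M | Cfg 0 s B M} = if s + (B.map List.length).sum = 0 then {∅} else ∅ := by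
  rw [← List.length_flatten]
  have hemp : ∀ M, Cfg 0 s B M → M = ∅ := by
    intro M h
    rw [Finset.eq_empty_iff_forall_notMem]
    rintro ⟨a, x⟩ hax
    have := h.rng a x hax; omega
  have hf : fixedPts 0 ∅ = ∅ := by simp [fixedPts]
  split_ifs with h
  · have hs : s = 0 := by omega
    have hl : B.flatten = [] := List.eq_nil_of_length_eq_zero (by omega)
    ext M
    simp only [Set.mem_setOf_eq, Set.mem_singleton_iff]
    constructor
    · exact hemp M
    · rintro rfl
      refine ⟨?_, ?_, ?_, by rw [hf, hs]; rfl, ?_, ?_, ?_⟩ <;> simp [hl]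
  · ext M
    simp only [Set.mem_setOf_eq, Set.mem_empty_iff_false, iff_false]
    intro hM
    have := hemp M hM
    subst this
    apply h
    have h1 := hM.fx
    rw [hf] at h1
    have h2 : B.flatten = [] := by
      rw [List.eq_nil_iff_forall_not_mem]
      intro x hx
      obtain ⟨a, ha⟩ := hM.cov x hx
      simp at ha
    rw [h2]; simp at h1 ⊢; omega

def Good (N : ℕ) (B : List (List ℕ)) : Prop :=
  (∀ x ∈ B.flatten, N < x) ∧ B.flatten.Pairwise (· > ·)

def opens (N : ℕ) (R : List (List ℕ)) (M : Finset (ℕ × ℕ)) : Prop :=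
  ∃ j ∈ R.flatten, (N, j) ∈ M

lemma cfg_open_piece (N s : ℕ) (L : List (List ℕ)) (b : List ℕ) (j : ℕ) (R : List (List ℕ))
    (hg : Good (N + 1) (L ++ (b ++ [j]) :: R)) :
    {M | Cfg (N + 1) s (L ++ (b ++ [j]) :: R) M ∧ ∃ i ∈ b ++ [j], (N + 1, i) ∈ M}.encard =
    {M | Cfg N s (L ++ [b, R.flatten]) M}.encard := by
  have : {M | Cfg (N + 1) s (L ++ (b ++ [j]) :: R) M ∧ ∃ i ∈ b ++ [j], (N + 1, i) ∈ M} =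
      (fun M => insert (N + 1, j) M) '' {M | Cfg N s (L ++ [b, R.flatten]) M} := by
    ext M
    simp only [Set.mem_setOf_eq, Set.mem_image]
    constructor
    · rintro ⟨h, i, hi, hm⟩
      rw [List.mem_append, List.mem_singleton] at hi
      rcases hi with hi | rfl
      · exact absurd hm (cfg_not_last N s L b j i R hg.2 hi M h)
      · refine ⟨M.erase (N + 1, i), ?_, Finset.insert_erase hm⟩
        refine cfg_opener1 N s L b i R hg.1 hg.2 _ (Finset.notMem_erase _ _) ?_
        rw [Finset.insert_erase hm]; exact h
    · rintro ⟨M', h, rfl⟩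
      have := cfg_opener2 N s L b j R hg.1 hg.2 M' h
      exact ⟨this.2, j, by simp, Finset.mem_insert_self _ _⟩
  rw [this]
  apply Set.InjOn.encard_image
  intro M1 h1 M2 h2 he
  have e1 := (cfg_opener2 N s L b j R hg.1 hg.2 M1 h1).1
  have e2 := (cfg_opener2 N s L b j R hg.1 hg.2 M2 h2).1
  have := congrArg (fun M => Finset.erase M (N + 1, j)) he
  simpa [Finset.erase_insert e1, Finset.erase_insert e2] using this

lemma good_open (N : ℕ) (L : List (List ℕ)) (b : List ℕ) (j : ℕ) (R : List (List ℕ))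
    (hg : Good (N + 1) (L ++ (b ++ [j]) :: R)) : Good N (L ++ [b, R.flatten]) := by
  have hsub : (L ++ [b, R.flatten]).flatten.Sublist (L ++ (b ++ [j]) :: R).flatten := by
    simp only [List.flatten_append, List.flatten_cons, List.flatten_nil, List.append_nil]
    refine List.Sublist.append (List.Sublist.refl _) (List.Sublist.append ?_ (List.Sublist.refl _))
    exact List.sublist_append_left _ _
  exact ⟨fun x hx => by have := hg.1 x (hsub.subset hx); omega, hg.2.sublist hsub⟩

lemma cfg_opens (N s : ℕ)
    (ih : ∀ s B, Good N B → {M | Cfg N s B M}.encard = (Phi (s :: B.map List.length) (W N) : ℕ)) :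
    ∀ (R L : List (List ℕ)), Good (N + 1) (L ++ R) →
    {M | Cfg (N + 1) s (L ++ R) M ∧ opens (N + 1) R M}.encard =
      (Phi (R.map List.length)
        (D ((s :: L.map List.length).foldl (fun F m => T m F) (W N))) : ℕ) := by
  intro R
  induction R with
  | nil =>
    intro L hg
    simp [opens, Phi, D]
  | cons b R ihR =>
    intro L hg
    have hassoc : L ++ b :: R = (L ++ [b]) ++ R := by simp
    have h1 := ihR (L ++ [b]) (by rw [← hassoc]; exact hg)
    rw [← hassoc] at h1
    rw [List.map_cons, Phi_cons_D]
    have hsplit : {M | Cfg (N + 1) s (L ++ b :: R) M ∧ opens (N + 1) (b :: R) M} =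
        {M | Cfg (N + 1) s (L ++ b :: R) M ∧ ∃ i ∈ b, (N + 1, i) ∈ M} ∪
        {M | Cfg (N + 1) s (L ++ b :: R) M ∧ opens (N + 1) R M} := by
      ext M
      simp only [opens, List.flatten_cons, List.mem_append, Set.mem_setOf_eq, Set.mem_union]
      constructor
      · rintro ⟨h, j, hj | hj, hm⟩
        · left; exact ⟨h, j, hj, hm⟩
        · right; exact ⟨h, j, hj, hm⟩
      · rintro (⟨h, j, hj, hm⟩ | ⟨h, j, hj, hm⟩)
        · exact ⟨h, j, Or.inl hj, hm⟩
        · exact ⟨h, j, Or.inr hj, hm⟩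
    have hdisj : Disjoint {M | Cfg (N + 1) s (L ++ b :: R) M ∧ ∃ i ∈ b, (N + 1, i) ∈ M}
        {M | Cfg (N + 1) s (L ++ b :: R) M ∧ opens (N + 1) R M} := by
      rw [Set.disjoint_left]
      rintro M ⟨h, i, hi, hm⟩ ⟨_, j, hj, hm'⟩
      have := (h.inj _ _ _ _ hm hm').2.1 rfl
      subst this
      have hs := hg.2
      simp only [List.flatten_append, List.flatten_cons, List.pairwise_append] at hs
      have := hs.2.1.2.2 i hi i hj
      omega
    rw [hsplit, Set.encard_union_eq hdisj, h1]
    have h2 : {M | Cfg (N + 1) s (L ++ b :: R) M ∧ ∃ i ∈ b, (N + 1, i) ∈ M}.encard =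
      ((if 1 ≤ b.length then Phi [b.length - 1, (R.map List.length).sum]
        ((s :: L.map List.length).foldl (fun F m => T m F) (W N)) else 0 : ℕ) : ℕ∞) := by
      rcases List.eq_nil_or_concat b with rfl | ⟨b', j, rfl⟩
      · simp
      · rw [List.concat_eq_append] at hg ⊢
        rw [cfg_open_piece N s L b' j R hg, ih s _ (good_open N L b' j R hg)]
        rw [if_pos (by simp), ← Phi_append]
        simp [List.length_flatten]
    rw [h2]
    push_cast
    simp

theorem cfg_card (N : ℕ) : ∀ s B, Good N B →
    {M | Cfg N s B M}.encard = (Phi (s :: B.map List.length) (W N) : ℕ) := by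
  induction N with
  | zero =>
    intro s B _
    rw [cfg_zero, phi_zero]
    split_ifs <;> simp
  | succ N ih =>
    intro s B hg
    have hg1 : Good N (B ++ [[N + 1]]) := by
      constructor
      · intro x hx
        simp only [List.flatten_append, List.mem_append] at hx
        rcases hx with hx | hx
        · have := hg.1 x hx; omega
        · simp at hx; omega
      · simp only [List.flatten_append, List.pairwise_append]
        refine ⟨hg.2, by simp, fun x hx y hy => ?_⟩
        simp at hy
        have := hg.1 x hx; omega
    have hg2 : Good N [B.flatten] := by
      constructor
      · intro x hx
        have := hg.1 x (by simpa using hx); omega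
      · simpa using hg.2
    have hsplit : {M | Cfg (N + 1) s B M} = {M | Cfg (N + 1) s B M ∧ ∃ p, (p, N + 1) ∈ M} ∪
        ({M | Cfg (N + 1) s B M ∧ N + 1 ∈ fixedPts (N + 1) M} ∪
         {M | Cfg (N + 1) s B M ∧ opens (N + 1) B M}) := by
      ext M
      simp only [Set.mem_setOf_eq, Set.mem_union, ← and_or_left]
      refine ⟨fun h => ⟨h, ?_⟩, fun h => h.1⟩
      by_cases h1 : ∃ p, (p, N + 1) ∈ M
      · left; exact h1
      · right
        by_cases h2 : ∃ j, (N + 1, j) ∈ M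
        · right
          obtain ⟨j, hj⟩ := h2
          refine ⟨j, ?_, hj⟩
          rcases (h.rng _ _ hj).2.2 with ⟨h3, h4 | h4⟩
          · omega
          · exact h4
        · left
          rw [mem_fixedPts]
          push Not at h1 h2
          exact ⟨by omega, h2, h1⟩
    have hd1 : Disjoint {M | Cfg (N + 1) s B M ∧ N + 1 ∈ fixedPts (N + 1) M}
         {M | Cfg (N + 1) s B M ∧ opens (N + 1) B M} := by
      rw [Set.disjoint_left]
      rintro M ⟨h, h1⟩ ⟨_, j, hj, hm⟩
      rw [mem_fixedPts] at h1
      exact h1.2.1 _ hm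
    have hd2 : Disjoint {M | Cfg (N + 1) s B M ∧ ∃ p, (p, N + 1) ∈ M}
        ({M | Cfg (N + 1) s B M ∧ N + 1 ∈ fixedPts (N + 1) M} ∪
         {M | Cfg (N + 1) s B M ∧ opens (N + 1) B M}) := by
      rw [Set.disjoint_left]
      rintro M ⟨h, p, hp⟩ (⟨_, h1⟩ | ⟨_, j, hj, hm⟩)
      · rw [mem_fixedPts] at h1
        exact h1.2.2 _ hp
      · exact (h.inj _ _ _ _ hm hp).1 rfl
    rw [hsplit, Set.encard_union_eq hd2, Set.encard_union_eq hd1]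
    have e1 : {M | Cfg (N + 1) s B M ∧ ∃ p, (p, N + 1) ∈ M} = {M | Cfg N s (B ++ [[N + 1]]) M} :=
      Set.ext fun M => cfg_closer N s B hg.1 M
    have e2 : {M | Cfg (N + 1) s B M ∧ N + 1 ∈ fixedPts (N + 1) M}.encard =
       ((if 1 ≤ s then Phi [s - 1, (B.map List.length).sum] (W N) else 0 : ℕ) : ℕ∞) := by
      have : {M | Cfg (N + 1) s B M ∧ N + 1 ∈ fixedPts (N + 1) M} =
          {M | 1 ≤ s ∧ Cfg N (s - 1) [B.flatten] M} :=
        Set.ext fun M => cfg_fixed N s B hg.1 M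
      rw [this]
      split_ifs with hs
      · simp only [hs, true_and]
        rw [ih _ _ hg2]
        simp [List.length_flatten]
      · simp [hs]
    have e3 := cfg_opens N s ih B [] (by simpa using hg)
    simp only [List.nil_append] at e3
    rw [e1, e2, e3, ih _ _ hg1, Phi_succ, Phi_cons_D]
    push_cast
    simp

end Mnk
namespace Mnk

lemma rank_le (S : Finset ℕ) {x y : ℕ} (h : x ≤ y) : rankIn S x ≤ rankIn S y := by
  unfold rankIn
  apply Finset.card_le_card
  intro z hz
  rw [Finset.mem_filter] at hz ⊢
  exact ⟨hz.1, hz.2.trans h⟩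

lemma rank_lt (S : Finset ℕ) {x y : ℕ} (hy : y ∈ S) (h : x < y) : rankIn S x < rankIn S y := by
  unfold rankIn
  apply Finset.card_lt_card
  rw [Finset.ssubset_iff_of_subset]
  · exact ⟨y, by simp [hy], by simp [h]⟩
  · intro z hz
    rw [Finset.mem_filter] at hz ⊢
    exact ⟨hz.1, hz.2.trans h.le⟩

lemma lt_of_rank (S : Finset ℕ) {x y : ℕ} (h : rankIn S x < rankIn S y) : x < y := by
  by_contra hc
  have := rank_le S (not_lt.1 hc)
  omega

lemma rank_inj (S : Finset ℕ) {x y : ℕ} (hx : x ∈ S) (hy : y ∈ S) (h : rankIn S x = rankIn S y) :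
    x = y := by
  rcases lt_trichotomy x y with h1 | h1 | h1
  · have := rank_lt S hy h1; omega
  · exact h1
  · have := rank_lt S hx h1; omega

lemma rank_pos (S : Finset ℕ) {x : ℕ} (hx : x ∈ S) : 1 ≤ rankIn S x :=
  Finset.card_pos.2 ⟨x, by simp [hx]⟩

lemma rank_le_card (S : Finset ℕ) (x : ℕ) : rankIn S x ≤ S.card :=
  Finset.card_le_card (Finset.filter_subset _ _)

lemma rank_surj (S : Finset ℕ) (r : ℕ) (h1 : 1 ≤ r) (h2 : r ≤ S.card) : ∃ x ∈ S, rankIn S x = r := by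
  have : S.image (rankIn S) = Finset.Icc 1 S.card := by
    apply Finset.eq_of_subset_of_card_le
    · intro z hz
      rw [Finset.mem_image] at hz
      obtain ⟨x, hx, rfl⟩ := hz
      rw [Finset.mem_Icc]
      exact ⟨rank_pos S hx, rank_le_card S x⟩
    · rw [Finset.card_image_of_injOn (fun x hx y hy h => rank_inj S hx hy h)]
      simp
  have hr : r ∈ S.image (rankIn S) := by rw [this, Finset.mem_Icc]; exact ⟨h1, h2⟩
  simpa using hr

lemma matched_card (m : ℕ) (M : Finset (ℕ × ℕ)) :
    (matchedSet m M).card + (fixedPts m M).card = m := by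
  have := Finset.card_filter_add_card_filter_not (s := Finset.Icc 1 m) (fun x => ∃ p ∈ M, p.1 = x ∨ p.2 = x)
  rw [Nat.card_Icc] at this
  unfold matchedSet fixedPts
  convert this using 3
  · ext x; push Not; rfl
  · omega

lemma perfect_relabeled (n k : ℕ) (M : Finset (ℕ × ℕ)) (h : IsPartialMatching (2 * n + k) M)
    (hk : (fixedPts (2 * n + k) M).card = k) : IsPerfectMatching n (relabeled (2 * n + k) M) := by
  have hc := matched_card (2 * n + k) M
  have hS1 : ∀ p ∈ M, p.1 ∈ matchedSet (2 * n + k) M := by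
    intro p hp
    have := h.1 p hp
    unfold matchedSet
    rw [Finset.mem_filter, Finset.mem_Icc]
    exact ⟨by omega, p, hp, Or.inl rfl⟩
  have hS2 : ∀ p ∈ M, p.2 ∈ matchedSet (2 * n + k) M := by
    intro p hp
    have := h.1 p hp
    unfold matchedSet
    rw [Finset.mem_filter, Finset.mem_Icc]
    exact ⟨by omega, p, hp, Or.inr rfl⟩
  unfold relabeled
  constructor
  · intro q hq
    rw [Finset.mem_image] at hq
    obtain ⟨p, hp, rfl⟩ := hq
    have h3 := rank_le_card (matchedSet (2 * n + k) M) p.2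
    exact ⟨rank_lt _ (hS2 p hp) (h.1 p hp).1, rank_pos _ (hS1 p hp), by simp only; omega⟩
  · intro r h1 h2
    obtain ⟨x, hx, rfl⟩ := rank_surj (matchedSet (2 * n + k) M) r h1 (by omega)
    have hx' := hx
    unfold matchedSet at hx'
    rw [Finset.mem_filter] at hx'
    obtain ⟨_, p, hp, hpx⟩ := hx'
    refine ⟨(rankIn (matchedSet (2 * n + k) M) p.1, rankIn (matchedSet (2 * n + k) M) p.2),
      ⟨Finset.mem_image_of_mem _ hp, ?_⟩, ?_⟩
    · rcases hpx with rfl | rfl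
      · left; rfl
      · right; rfl
    · rintro q' ⟨hq', hqx⟩
      rw [Finset.mem_image] at hq'
      obtain ⟨q, hq, rfl⟩ := hq'
      have hqx : q.1 = x ∨ q.2 = x := by
        rcases hqx with h | h
        · left; exact rank_inj _ (hS1 q hq) hx h
        · right; exact rank_inj _ (hS2 q hq) hx h
      have : p = q := by
        by_contra hne
        have := h.2 p hp q hq hne
        omega
      rw [this]

lemma contains_iff (m : ℕ) (M : Finset (ℕ × ℕ)) (h : IsPartialMatching m M) :
    MatchContains p321 (relabeled m M) ↔
    ∃ a b c x y z, (a, x) ∈ M ∧ (b, y) ∈ M ∧ (c, z) ∈ M ∧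
      a < b ∧ b < c ∧ c < x ∧ x < y ∧ y < z := by
  have hS1 : ∀ a x, (a, x) ∈ M → a ∈ matchedSet m M := by
    intro a x hp
    have := h.1 _ hp
    simp only at this
    unfold matchedSet
    rw [Finset.mem_filter, Finset.mem_Icc]
    exact ⟨by omega, _, hp, Or.inl rfl⟩
  have hS2 : ∀ a x, (a, x) ∈ M → x ∈ matchedSet m M := by
    intro a x hp
    have := h.1 _ hp
    simp only at this
    unfold matchedSet
    rw [Finset.mem_filter, Finset.mem_Icc]
    exact ⟨by omega, _, hp, Or.inr rfl⟩
  unfold MatchContains relabeled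
  constructor
  · rintro ⟨f, hf, hM⟩
    have h0 := hM 0
    have h1 := hM 1
    have h2 := hM 2
    rw [Finset.mem_image] at h0 h1 h2
    obtain ⟨⟨a, x⟩, hax, e0⟩ := h0
    obtain ⟨⟨b, y⟩, hby, e1⟩ := h1
    obtain ⟨⟨c, z⟩, hcz, e2⟩ := h2
    rw [Prod.mk.injEq] at e0 e1 e2
    obtain ⟨ea, ex⟩ := e0
    obtain ⟨eb, ey⟩ := e1
    obtain ⟨ec, ez⟩ := e2
    refine ⟨a, b, c, x, y, z, hax, hby, hcz, ?_, ?_, ?_, ?_, ?_⟩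
    · apply lt_of_rank; simp only at ea eb; rw [ea, eb]; apply hf; decide
    · apply lt_of_rank; simp only at eb ec; rw [eb, ec]; apply hf; decide
    · apply lt_of_rank; simp only at ec ex; rw [ec, ex]; apply hf; decide
    · apply lt_of_rank; simp only at ex ey; rw [ex, ey]; apply hf; decide
    · apply lt_of_rank; simp only at ey ez; rw [ey, ez]; apply hf; decide
  · rintro ⟨a, b, c, x, y, z, hax, hby, hcz, h1, h2, h3, h4, h5⟩
    refine ⟨fun i => rankIn (matchedSet m M) (![a, b, c, x, y, z] i), ?_, ?_⟩
    · rw [Fin.strictMono_iff_lt_succ]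
      intro i
      fin_cases i
      · exact rank_lt _ (hS1 _ _ hby) h1
      · exact rank_lt _ (hS1 _ _ hcz) h2
      · exact rank_lt _ (hS2 _ _ hax) h3
      · exact rank_lt _ (hS2 _ _ hby) h4
      · exact rank_lt _ (hS2 _ _ hcz) h5
    · intro i
      rw [Finset.mem_image]
      fin_cases i
      · exact ⟨_, hax, rfl⟩
      · exact ⟨_, hby, rfl⟩
      · exact ⟨_, hcz, rfl⟩

lemma lhs_iff (n k : ℕ) (M : Finset (ℕ × ℕ)) :
    (IsPartialMatching (2 * n + k) M ∧ (fixedPts (2 * n + k) M).card = k ∧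
        IsPerfectMatching n (relabeled (2 * n + k) M) ∧
        MatchAvoids p321 (relabeled (2 * n + k) M) ∧
        ∀ x1 x2 x3 x4 x5 : ℕ, x1 < x2 → x2 < x3 → x3 < x4 → x4 < x5 →
          (x1, x4) ∈ M → (x2, x5) ∈ M → x3 ∉ fixedPts (2 * n + k) M) ↔ Cfg (2 * n + k) k [] M := by
  constructor
  · rintro ⟨h1, h2, _, h4, h5⟩
    unfold MatchAvoids at h4
    rw [contains_iff _ _ h1] at h4
    refine ⟨?_, ?_, by simp, h2, ?_, ?_, by simp⟩
    · intro a x hax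
      have := h1.1 _ hax
      simp only at this
      omega
    · intro a x b y ha hb
      have g1 := h1.1 _ ha
      by_cases he : (a, x) = (b, y)
      · rw [Prod.mk.injEq] at he
        simp only at g1
        omega
      · have := h1.2 _ ha _ hb he
        simp only at this
        omega
    · intro a b c x y z g1 g2 g3 g4 g5 g6 g7 g8
      exact h4 ⟨a, b, c, x, y, z, g1, g2, g3, g4, g5, g6, g7, g8⟩
    · intro a b c x y g1 g2 g3 g4 g5 g6 g7
      exact h5 a b c x y g3 g4 g5 g6 g1 g2 g7
  · intro h
    have hp : IsPartialMatching (2 * n + k) M := by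
      constructor
      · rintro ⟨a, x⟩ hax
        have := h.rng a x hax
        simp at this
        simp only
        omega
      · rintro ⟨a, x⟩ ha ⟨b, y⟩ hb hne
        have g1 := h.inj _ _ _ _ ha hb
        have g2 := h.inj _ _ _ _ hb ha
        have g3 : ¬ (a = b ∧ x = y) := by rwa [ne_eq, Prod.mk.injEq] at hne
        simp only
        omega
    refine ⟨hp, h.fx, perfect_relabeled n k M hp h.fx, ?_, ?_⟩
    · unfold MatchAvoids
      rw [contains_iff _ _ hp]
      rintro ⟨a, b, c, x, y, z, g1, g2, g3, g4, g5, g6, g7, g8⟩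
      exact h.nc3 a b c x y z g1 g2 g3 g4 g5 g6 g7 g8
    · intro a b c x y g3 g4 g5 g6 g1 g2 g7
      exact h.nc2 a b c x y g1 g2 g3 g4 g5 g6 g7

end Mnk
namespace Mnk

def ht (l : List Bool) : ℤ := (l.count true : ℤ) - (l.count false : ℤ)

def sg (x : Bool) : ℤ := if x then 1 else -1

lemma ht_append (l r : List Bool) : ht (l ++ r) = ht l + ht r := by
  simp only [ht, List.count_append]; push_cast; ring

lemma ht_sing (x : Bool) : ht [x] = sg x := by cases x <;> simp [ht, sg]

lemma ph_append (l r : List Bool) (i : ℕ) :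
    pathHeight (l ++ r) i = pathHeight l i + ht (r.take (i - l.length)) := by
  change ht (List.take i (l ++ r)) = ht (List.take i l) + _
  rw [List.take_append, ht_append]

lemma ph_ge (l : List Bool) (i : ℕ) (h : l.length ≤ i) : pathHeight l i = ht l := by
  change ht (List.take i l) = ht l
  rw [List.take_of_length_le h]

def A (N : ℕ) (h0 h1 : ℤ) : Set (List Bool × List Bool) :=
  {st | st.1.length = N ∧ st.2.length = N ∧ (∀ i, 0 ≤ pathHeight st.1 i) ∧
    (∀ i, pathHeight st.1 i ≤ pathHeight st.2 i) ∧ ht st.1 = h0 ∧ ht st.2 = h1}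

lemma A_le {N : ℕ} {h0 h1 : ℤ} {st} (h : st ∈ A N h0 h1) : 0 ≤ h0 ∧ h0 ≤ h1 := by
  obtain ⟨e1, e2, e3, e4, e5, e6⟩ := h
  have a := e3 N
  have b := e4 N
  rw [ph_ge _ _ e1.le] at a b
  rw [ph_ge _ _ e2.le] at b
  omega

lemma A_empty {N : ℕ} {h0 h1 : ℤ} (h : ¬ (0 ≤ h0 ∧ h0 ≤ h1)) : A N h0 h1 = ∅ := by
  rw [Set.eq_empty_iff_forall_notMem]
  exact fun st hst => h (A_le hst)

lemma A_snoc (N : ℕ) (h0 h1 : ℤ) (hh : 0 ≤ h0 ∧ h0 ≤ h1) (l l' : List Bool) (x y : Bool) :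
    (l ++ [x], l' ++ [y]) ∈ A (N + 1) h0 h1 ↔ (l, l') ∈ A N (h0 - sg x) (h1 - sg y) := by
  have hph : ∀ (l : List Bool) (x : Bool), l.length = N → ∀ i, pathHeight (l ++ [x]) i =
      if i ≤ N then pathHeight l i else ht l + sg x := by
    intro l x hl i
    rw [ph_append]
    split_ifs with h
    · have : i - l.length = 0 := by omega
      rw [this]; simp [ht]
    · obtain ⟨j, hj⟩ : ∃ j, i - l.length = j + 1 := ⟨i - l.length - 1, by omega⟩
      rw [hj, ph_ge l i (by omega)]
      simp [ht_sing]
  constructor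
  · rintro ⟨e1, e2, e3, e4, e5, e6⟩
    simp only [List.length_append, List.length_singleton] at e1 e2 e3 e4 e5 e6
    have l1 : l.length = N := by omega
    have l2 : l'.length = N := by omega
    rw [ht_append, ht_sing] at e5 e6
    refine ⟨l1, l2, fun i => ?_, fun i => ?_, ?_, ?_⟩
    · have := e3 (min i N)
      rw [hph l x l1, if_pos (by omega)] at this
      rcases Nat.le_total i N with h | h
      · rwa [min_eq_left h] at this
      · rw [min_eq_right h] at this
        simp only
        rw [ph_ge l i (by omega)]; rwa [ph_ge l N (by omega)] at this
    · have := e4 (min i N)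
      rw [hph l x l1, hph l' y l2, if_pos (by omega), if_pos (by omega)] at this
      rcases Nat.le_total i N with h | h
      · rwa [min_eq_left h] at this
      · rw [min_eq_right h] at this
        simp only
        rw [ph_ge l i (by omega), ph_ge l' i (by omega)]
        rwa [ph_ge l N (by omega), ph_ge l' N (by omega)] at this
    · simp only; omega
    · simp only; omega
  · rintro ⟨l1, l2, e3, e4, e5, e6⟩
    simp only at l1 l2 e3 e4 e5 e6
    refine ⟨by simp [l1], by simp [l2], fun i => ?_, fun i => ?_, ?_, ?_⟩
    · simp only
      rw [hph l x l1]
      split_ifs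
      · exact e3 i
      · omega
    · simp only
      rw [hph l x l1, hph l' y l2]
      split_ifs
      · exact e4 i
      · omega
    · simp only; rw [ht_append, ht_sing]; omega
    · simp only; rw [ht_append, ht_sing]; omega

def sn (x y : Bool) (st : List Bool × List Bool) : List Bool × List Bool :=
  (st.1 ++ [x], st.2 ++ [y])

lemma sn_inj (x y : Bool) : Function.Injective (sn x y) := by
  rintro ⟨a, b⟩ ⟨c, d⟩ h
  simpa [sn] using h

lemma sn_disj (x y x' y' : Bool) (h : (x, y) ≠ (x', y')) (P Q : Set (List Bool × List Bool)) :
    Disjoint (sn x y '' P) (sn x' y' '' Q) := by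
  rw [Set.disjoint_left]
  rintro _ ⟨⟨a, b⟩, _, rfl⟩ ⟨⟨c, d⟩, _, he⟩
  simp only [sn, Prod.mk.injEq] at he
  have h1 := List.append_inj_right' he.1 rfl
  have h2 := List.append_inj_right' he.2 rfl
  simp only [List.cons.injEq, and_true] at h1 h2
  exact h (by rw [h1, h2])

lemma A_succ (N : ℕ) (h0 h1 : ℤ) (hh : 0 ≤ h0 ∧ h0 ≤ h1) :
    (A (N + 1) h0 h1).encard = (A N (h0 - 1) (h1 - 1)).encard + ((A N (h0 - 1) (h1 + 1)).encard +
      ((A N (h0 + 1) (h1 - 1)).encard + (A N (h0 + 1) (h1 + 1)).encard)) := by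
  have : A (N + 1) h0 h1 = sn true true '' A N (h0 - 1) (h1 - 1) ∪
      (sn true false '' A N (h0 - 1) (h1 + 1) ∪ (sn false true '' A N (h0 + 1) (h1 - 1) ∪
        sn false false '' A N (h0 + 1) (h1 + 1))) := by
    ext st
    constructor
    · rintro hst
      obtain ⟨s, t⟩ := st
      have hs : s.length = N + 1 := hst.1
      have ht : t.length = N + 1 := hst.2.1
      rcases List.eq_nil_or_concat s with rfl | ⟨l, x, rfl⟩
      · simp at hs
      rcases List.eq_nil_or_concat t with rfl | ⟨l', y, rfl⟩
      · simp at ht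
      rw [List.concat_eq_append, List.concat_eq_append] at hst ⊢
      rw [A_snoc _ _ _ hh] at hst
      cases x <;> cases y
      · right; right; right; exact ⟨(l, l'), by simpa [sg] using hst, rfl⟩
      · right; right; left; exact ⟨(l, l'), by simpa [sg] using hst, rfl⟩
      · right; left; exact ⟨(l, l'), by simpa [sg] using hst, rfl⟩
      · left; exact ⟨(l, l'), by simpa [sg] using hst, rfl⟩
    · rintro (⟨⟨l, l'⟩, h, rfl⟩ | ⟨⟨l, l'⟩, h, rfl⟩ | ⟨⟨l, l'⟩, h, rfl⟩ | ⟨⟨l, l'⟩, h, rfl⟩)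
      all_goals
        refine (A_snoc _ _ _ hh _ _ _ _).2 ?_
        simpa [sg] using h
  rw [this, Set.encard_union_eq, Set.encard_union_eq, Set.encard_union_eq,
    (sn_inj _ _).encard_image, (sn_inj _ _).encard_image, (sn_inj _ _).encard_image,
    (sn_inj _ _).encard_image]
  · exact sn_disj _ _ _ _ (by decide) _ _
  · rw [Set.disjoint_union_right]
    exact ⟨sn_disj _ _ _ _ (by decide) _ _, sn_disj _ _ _ _ (by decide) _ _⟩
  · rw [Set.disjoint_union_right, Set.disjoint_union_right]
    exact ⟨sn_disj _ _ _ _ (by decide) _ _, sn_disj _ _ _ _ (by decide) _ _,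
      sn_disj _ _ _ _ (by decide) _ _⟩

lemma A_zero (h0 h1 : ℤ) : A 0 h0 h1 = if h0 = 0 ∧ h1 = 0 then {([], [])} else ∅ := by
  ext ⟨s, t⟩
  have : ∀ i, pathHeight [] i = 0 := fun i => by simp [pathHeight]
  split_ifs with h
  · rw [Set.mem_singleton_iff, Prod.mk.injEq]
    constructor
    · rintro ⟨e1, e2, _⟩
      exact ⟨List.eq_nil_of_length_eq_zero e1, List.eq_nil_of_length_eq_zero e2⟩
    · rintro ⟨rfl, rfl⟩
      refine ⟨rfl, rfl, ?_, ?_, ?_, ?_⟩ <;> simp [this, ht, h]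
  · simp only [Set.mem_empty_iff_false, iff_false]
    rintro ⟨e1, e2, _, _, e5, e6⟩
    have a := List.eq_nil_of_length_eq_zero e1
    have b := List.eq_nil_of_length_eq_zero e2
    simp only at a b e5 e6
    subst a b
    simp [ht] at e5 e6
    omega

lemma A_card (N : ℕ) : ∀ d c : ℕ, (A N d (d + 2 * c)).encard = (W N d c : ℕ) := by
  induction N with
  | zero =>
    intro d c
    rw [A_zero]
    simp only [W]
    rcases c with _ | c <;> rcases d with _ | d
    · simp
    · rw [if_neg (by omega)]; simp
    · rw [if_neg (by omega)]; simp
    · rw [if_neg (by omega)]; simp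
  | succ N ih =>
    intro d c
    rw [A_succ _ _ _ (by omega)]
    have e1 : (A N ((d : ℤ) - 1) (d + 2 * c - 1)).encard =
        ((if 1 ≤ d then W N (d - 1) c else 0 : ℕ) : ℕ∞) := by
      split_ifs with h
      · rw [← ih]; congr 2 <;> omega
      · rw [A_empty (by omega)]; simp
    have e2 : (A N ((d : ℤ) - 1) (d + 2 * c + 1)).encard =
        ((if 1 ≤ d then W N (d - 1) (c + 1) else 0 : ℕ) : ℕ∞) := by
      split_ifs with h
      · rw [← ih]; congr 2 <;> omega
      · rw [A_empty (by omega)]; simp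
    have e3 : (A N ((d : ℤ) + 1) (d + 2 * c - 1)).encard =
        ((if 1 ≤ c then W N (d + 1) (c - 1) else 0 : ℕ) : ℕ∞) := by
      split_ifs with h
      · rw [← ih]; congr 2 <;> omega
      · rw [A_empty (by omega)]; simp
    have e4 : (A N ((d : ℤ) + 1) (d + 2 * c + 1)).encard = (W N (d + 1) c : ℕ) := by
      rw [← ih]; congr 2; omega
    rw [e1, e2, e3, e4]
    simp only [W]
    rw [T_one]
    unfold D
    norm_cast
    omega

lemma cnt (l : List Bool) : l.count true + l.count false = l.length := by
  induction l with
  | nil => rfl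
  | cons x l ih => cases x <;> simp <;> omega

lemma ph_rep (l : List Bool) (k i : ℕ) :
    pathHeight (l ++ List.replicate k false) i = pathHeight l i - (min (i - l.length) k : ℕ) := by
  rw [ph_append, List.take_replicate]
  simp [ht, List.count_replicate]
  ring

lemma dyck_iff (n k : ℕ) (l : List Bool) : IsDyckPath (n + k) (l ++ List.replicate k false) ↔
    l.length = 2 * n + k ∧ (∀ i, 0 ≤ pathHeight l i) ∧ ht l = k := by
  have hc := cnt l
  have hd : (∀ i, ((l ++ List.replicate k false).take i).count false ≤
      ((l ++ List.replicate k false).take i).count true) ↔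
      ∀ i, 0 ≤ pathHeight (l ++ List.replicate k false) i := by
    refine forall_congr' fun i => ?_
    unfold pathHeight; omega
  unfold IsDyckPath
  rw [hd]
  simp only [ph_rep]
  simp only [List.length_append, List.length_replicate, List.count_append, List.count_replicate]
  simp only [ht]
  constructor
  · rintro ⟨h1, h2, h3⟩
    simp at h2
    refine ⟨by omega, fun i => ?_, by omega⟩
    have := h3 i; omega
  · rintro ⟨h1, h2, h3⟩
    refine ⟨by omega, by simp; omega, fun i => ?_⟩
    by_cases hi : i ≤ l.length
    · have := h2 i
      have e : i - l.length = 0 := by omega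
      rw [e]; simpa using this
    · rw [ph_ge l i (by omega)]
      simp only [ht]; omega

lemma rhs_eq (n k : ℕ) : {st : List Bool × List Bool |
        IsDyckPath (n + k) st.1 ∧ IsDyckPath (n + k) st.2 ∧ WeaklyBelow st.1 st.2 ∧
        st.1.drop (2 * (n + k) - k) = List.replicate k false ∧
        st.2.drop (2 * (n + k) - k) = List.replicate k false} =
    (fun st : List Bool × List Bool => (st.1 ++ List.replicate k false, st.2 ++ List.replicate k false))
      '' A (2 * n + k) k k := by
  have hw : ∀ l l' : List Bool, l.length = l'.length → (WeaklyBelow (l ++ List.replicate k false)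
      (l' ++ List.replicate k false) ↔ ∀ i, pathHeight l i ≤ pathHeight l' i) := by
    intro l l' h
    unfold WeaklyBelow
    refine forall_congr' fun i => ?_
    rw [ph_rep, ph_rep, h]; omega
  ext ⟨s, t⟩
  constructor
  · rintro ⟨h1, h2, h3, h4, h5⟩
    simp only at h1 h2 h3 h4 h5
    have es := (List.take_append_drop (2 * (n + k) - k) s).symm
    have et := (List.take_append_drop (2 * (n + k) - k) t).symm
    rw [h4] at es
    rw [h5] at et
    generalize List.take (2 * (n + k) - k) s = l at es
    generalize List.take (2 * (n + k) - k) t = l' at et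
    subst es et
    rw [dyck_iff] at h1 h2
    rw [hw _ _ (by omega)] at h3
    exact ⟨(l, l'), ⟨h1.1, h2.1, h1.2.1, h3, h1.2.2, h2.2.2⟩, rfl⟩
  · rintro ⟨⟨l, l'⟩, ⟨h1, h2, h3, h4, h5, h6⟩, he⟩
    simp only [Prod.mk.injEq] at he
    obtain ⟨rfl, rfl⟩ := he
    simp only at h1 h2 h3 h4 h5 h6
    have e : 2 * (n + k) - k = 2 * n + k := by omega
    refine ⟨(dyck_iff _ _ _).2 ⟨h1, h3, h5⟩,
      (dyck_iff _ _ _).2 ⟨h2, fun i => (h3 i).trans (h4 i), h6⟩, (hw _ _ (by omega)).2 h4, ?_, ?_⟩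
    · simp only; rw [e, ← h1, List.drop_left]
    · simp only; rw [e, ← h2, List.drop_left]

end Mnk
/-- `|M_n^k(321)|` equals the number of pairs `(D_0, D_1)` of noncrossing
Dyck paths of semilength `n + k` both ending with `k` south steps. -/
theorem card_Mnk321_eq_card_noncrossing_pairs (n k : ℕ) :
    {M : Finset (ℕ × ℕ) |
        IsPartialMatching (2 * n + k) M ∧ (fixedPts (2 * n + k) M).card = k ∧
        IsPerfectMatching n (relabeled (2 * n + k) M) ∧
        MatchAvoids p321 (relabeled (2 * n + k) M) ∧
        ∀ x1 x2 x3 x4 x5 : ℕ, x1 < x2 → x2 < x3 → x3 < x4 → x4 < x5 →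
          (x1, x4) ∈ M → (x2, x5) ∈ M → x3 ∉ fixedPts (2 * n + k) M}.ncard =
    {st : List Bool × List Bool |
        IsDyckPath (n + k) st.1 ∧ IsDyckPath (n + k) st.2 ∧ WeaklyBelow st.1 st.2 ∧
        st.1.drop (2 * (n + k) - k) = List.replicate k false ∧
        st.2.drop (2 * (n + k) - k) = List.replicate k false}.ncard := by
  have h1 : {M : Finset (ℕ × ℕ) |
        IsPartialMatching (2 * n + k) M ∧ (fixedPts (2 * n + k) M).card = k ∧
        IsPerfectMatching n (relabeled (2 * n + k) M) ∧
        MatchAvoids p321 (relabeled (2 * n + k) M) ∧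
        ∀ x1 x2 x3 x4 x5 : ℕ, x1 < x2 → x2 < x3 → x3 < x4 → x4 < x5 →
          (x1, x4) ∈ M → (x2, x5) ∈ M → x3 ∉ fixedPts (2 * n + k) M} =
      {M | Mnk.Cfg (2 * n + k) k [] M} := Set.ext fun M => Mnk.lhs_iff n k M
  rw [h1, Mnk.rhs_eq]
  rw [Set.ncard_def, Set.ncard_def, Mnk.cfg_card _ _ _ ⟨by simp, by simp⟩]
  rw [Function.Injective.encard_image]
  · have := Mnk.A_card (2 * n + k) k 0
    simp only [Nat.cast_zero, mul_zero, add_zero] at this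
    rw [this]
    simp [Mnk.Phi, Mnk.T]
  · rintro ⟨a, b⟩ ⟨c, d⟩ h
    simpa using h
end

section
/- For all nonnegative integers n and k, the number of matchings in M_n^k(213) equals the number of pairs (D_0, D_1) of Dyck paths of semilength n+k such that D_0 lies weakly below D_1 and both D_0 and D_1 end with k consecutive south steps. (In the paper this is realized by an explicit bijection.) -/
def YA (m f R : ℕ) : Set (List Bool × List Bool) :=
  {p | p.2.length = m ∧ p.2.count true = p.2.count false + f ∧ p.1.count false = p.2.count false ∧
    p.1.count true = p.1.count false + R ∧ R ≤ f ∧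
    (∀ i, (p.1.take i).count false ≤ (p.1.take i).count true) ∧
    ∀ i, (p.2.take i).count false ≤ (p.1.take i).count false}

def YE (m f R : ℕ) : Set (List Bool × List Bool) :=
  {p | p ∈ YA m f R ∧ ∀ s, p.1 ≠ s ++ [true]}

lemma len_cnt (l : List Bool) : l.length = l.count true + l.count false := by
  induction l with
  | nil => simp
  | cons a l ih => cases a <;> simp <;> omega

lemma cnt_take_le (l : List Bool) (i : ℕ) (b : Bool) : (l.take i).count b ≤ l.count b :=
  (List.take_sublist i l).count_le b

lemma cnt_take_snoc (l : List Bool) (i : ℕ) (a b : Bool) :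
    ((l ++ [a]).take i).count b = if i ≤ l.length then (l.take i).count b else (l ++ [a]).count b := by
  split_ifs with h
  · rw [List.take_append_of_le_length h]
  · rw [List.take_of_length_le (by simp; omega)]

lemma cnt_take_all (l : List Bool) (i : ℕ) (b : Bool) (h : l.length ≤ i) :
    (l.take i).count b = l.count b := by rw [List.take_of_length_le h]

lemma YA_zero (m f : ℕ) : YA m f 0 = YE m f 0 := by
  ext ⟨s, t⟩
  simp only [YE, Set.mem_ofPred_eq]
  refine ⟨fun h => ⟨h, ?_⟩, fun h => h.1⟩
  rintro s' rfl
  obtain ⟨h1, h2, h3, h4, h5, h6, h7⟩ := h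
  have := h6 s'.length
  simp at this h4
  simp at h3
  omega

lemma snoc_true_mem (m f R : ℕ) (h : R + 1 ≤ f) (s t : List Bool) :
    (s ++ [true], t) ∈ YA m f (R+1) ↔ (s, t) ∈ YA m f R := by
  have key : ∀ i, ((s ++ [true]).take i).count false = (s.take i).count false := by
    intro i
    rw [cnt_take_snoc]; split_ifs with h
    · rfl
    · rw [cnt_take_all _ _ _ (by omega)]; simp
  simp only [YA, Set.mem_ofPred_eq, key]
  simp only [List.count_append, List.count_singleton]
  simp [-and_congr_right_iff, -and_congr_left_iff]
  constructor
  · rintro ⟨h1, h2, h3, h4, h5, h6, h7⟩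
    refine ⟨h1, h2, h3, by omega, by omega, ?_, h7⟩
    intro i
    rcases le_or_gt i s.length with hi | hi
    · have := h6 i
      rw [List.take_append_of_le_length hi] at this
      exact this
    · rw [cnt_take_all _ _ _ hi.le, cnt_take_all _ _ _ hi.le]; omega
  · rintro ⟨h1, h2, h3, h4, h5, h6, h7⟩
    refine ⟨h1, h2, h3, by omega, by omega, ?_, h7⟩
    intro i
    have e : (s.take i).count true ≤ (s.take i ++ List.take (i - s.length) [true]).count true := by
      simp
    have := h6 i
    rw [List.take_append]
    omega

lemma YA_succ (m f R : ℕ) (h : R + 1 ≤ f) :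
    (YA m f (R+1)).encard = (YE m f (R+1)).encard + (YA m f R).encard := by
  have hinj : Set.InjOn (fun p : List Bool × List Bool => (p.1 ++ [true], p.2)) (YA m f R) := by
    rintro ⟨a, b⟩ _ ⟨c, d⟩ _ h
    simpa using h
  rw [← hinj.encard_image, ← Set.encard_union_eq]
  · congr 1
    ext ⟨s, t⟩
    simp only [Set.mem_union, Set.mem_image, Prod.exists, Prod.mk.injEq]
    constructor
    · intro hs
      by_cases hh : ∃ s', s = s' ++ [true]
      · obtain ⟨s', rfl⟩ := hh
        exact Or.inr ⟨s', t, (snoc_true_mem m f R h s' t).1 hs, rfl, rfl⟩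
      · push Not at hh
        exact Or.inl ⟨hs, hh⟩
    · rintro (hs | ⟨s', t', h1, rfl, rfl⟩)
      · exact hs.1
      · exact (snoc_true_mem m f R h s' t').2 h1
  · rw [Set.disjoint_left]
    rintro ⟨s, t⟩ h1 ⟨⟨s', t'⟩, h2, h3⟩
    simp only [Prod.mk.injEq] at h3
    exact h1.2 s' h3.1.symm

lemma YE_true (m f r : ℕ) (s t : List Bool) :
    (s, t ++ [true]) ∈ YE (m+1) (f+1) r ↔ (s, t) ∈ YE m f r := by
  have key : ∀ i, ((t ++ [true]).take i).count false = (t.take i).count false := by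
    intro i
    rw [cnt_take_snoc]; split_ifs with h
    · rfl
    · rw [cnt_take_all _ _ _ (by omega)]; simp
  simp only [YE, YA, Set.mem_ofPred_eq, key]
  simp only [List.count_append, List.count_singleton]
  simp [-and_congr_right_iff, -and_congr_left_iff]
  constructor
  · rintro ⟨⟨h1, h2, h3, h4, h5, h6, h7⟩, hs⟩
    refine ⟨⟨h1, by omega, h3, by omega, ?_, h6, h7⟩, hs⟩
    by_contra hr
    rcases List.eq_nil_or_concat s with rfl | ⟨s', b, rfl⟩
    · simp at h4; omega
    · have l1 := len_cnt t
      cases b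
      · have l2 := len_cnt (s' ++ [false])
        have := h7 s'.length
        simp at this h3 h4 l2
        rw [cnt_take_all _ _ _ (by omega)] at this
        omega
      · exact hs s' (by simp)
  · rintro ⟨⟨h1, h2, h3, h4, h5, h6, h7⟩, hs⟩
    exact ⟨⟨h1, by omega, h3, by omega, by omega, h6, h7⟩, hs⟩

lemma YE_false (m f r : ℕ) (s t : List Bool) :
    (s ++ [false], t ++ [false]) ∈ YE (m+1) f r ↔ (s, t) ∈ YA m (f+1) (r+1) := by
  simp only [YE, YA, Set.mem_ofPred_eq, cnt_take_snoc]
  simp only [List.count_append, List.count_singleton]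
  simp [-and_congr_right_iff, -and_congr_left_iff]
  have l1 := len_cnt t
  have l2 := len_cnt s
  constructor
  · rintro ⟨h1, h2, h3, h4, h5, h6, h7⟩
    refine ⟨h1, by omega, h3, by omega, by omega, ?_, ?_⟩
    · intro i
      rcases le_or_gt i s.length with hi | hi
      · simpa [hi] using h6 i
      · rw [cnt_take_all _ _ _ hi.le, cnt_take_all _ _ _ hi.le]; omega
    · intro i
      rcases le_or_gt i s.length with hi | hi
      · have : i ≤ t.length := by omega
        simpa [hi, this] using h7 i
      · rw [cnt_take_all _ _ _ hi.le, h3]; apply cnt_take_le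
  · rintro ⟨h1, h2, h3, h4, h5, h6, h7⟩
    refine ⟨h1, by omega, h3, by omega, by omega, ?_, ?_⟩
    · intro i
      split_ifs
      · exact h6 i
      · omega
    · intro i
      have := h7 i
      have := cnt_take_le t i false
      split_ifs <;> omega

lemma YE_succ_decomp (m f r : ℕ) (s t : List Bool) (h : (s, t) ∈ YE (m+1) f r) :
    (∃ t', t = t' ++ [true]) ∨ ∃ s' t', s = s' ++ [false] ∧ t = t' ++ [false] := by
  rcases List.eq_nil_or_concat t with rfl | ⟨t', b, rfl⟩
  · have := h.1.1; simp at this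
  cases b
  · right
    rcases List.eq_nil_or_concat s with rfl | ⟨s', b, rfl⟩
    · have := h.1.2.2.1; simp at this
    cases b
    · exact ⟨s', t', by simp, by simp⟩
    · exact absurd (by simp) (h.2 s')
  · left; exact ⟨t', by simp⟩

lemma injF (S : Set (List Bool × List Bool)) :
    Set.InjOn (fun p : List Bool × List Bool => (p.1 ++ [false], p.2 ++ [false])) S := by
  rintro ⟨a, b⟩ _ ⟨c, d⟩ _ h
  simpa using h

lemma injT (S : Set (List Bool × List Bool)) :
    Set.InjOn (fun p : List Bool × List Bool => (p.1, p.2 ++ [true])) S := by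
  rintro ⟨a, b⟩ _ ⟨c, d⟩ _ h
  simpa using h

lemma YE_rec0 (m r : ℕ) : (YE (m+1) 0 r).encard = (YA m 1 (r+1)).encard := by
  rw [← (injF (YA m 1 (r+1))).encard_image]
  congr 1
  ext ⟨s, t⟩
  simp only [Set.mem_image, Prod.exists, Prod.mk.injEq]
  constructor
  · intro h
    rcases YE_succ_decomp _ _ _ _ _ h with ⟨t', rfl⟩ | ⟨s', t', rfl, rfl⟩
    · exfalso
      obtain ⟨⟨h1, h2, h3, h4, h5, h6, h7⟩, h8⟩ := h
      simp at h1 h2 h3 h4 h5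
      have l1 := len_cnt t'
      rcases List.eq_nil_or_concat s with rfl | ⟨s', b, rfl⟩
      · simp at h3; omega
      · cases b
        · have := h7 s'.length
          have l2 := len_cnt s'
          simp at this h3 h4
          rw [cnt_take_snoc] at this
          split_ifs at this
          · rw [cnt_take_all _ _ _ (by omega)] at this
            omega
          · simp at this; omega
        · exact h8 s' (by simp)
    · exact ⟨s', t', (YE_false _ _ _ _ _).1 h, rfl, rfl⟩
  · rintro ⟨s', t', h, rfl, rfl⟩
    exact (YE_false _ _ _ _ _).2 h

lemma YE_rec1 (m f r : ℕ) :
    (YE (m+1) (f+1) r).encard = (YE m f r).encard + (YA m (f+2) (r+1)).encard := by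
  rw [← (injF (YA m (f+2) (r+1))).encard_image, ← (injT (YE m f r)).encard_image,
    ← Set.encard_union_eq]
  · congr 1
    ext ⟨s, t⟩
    simp only [Set.mem_union, Set.mem_image, Prod.exists, Prod.mk.injEq]
    constructor
    · intro h
      rcases YE_succ_decomp _ _ _ _ _ h with ⟨t', rfl⟩ | ⟨s', t', rfl, rfl⟩
      · exact Or.inl ⟨s, t', (YE_true _ _ _ _ _).1 h, rfl, rfl⟩
      · exact Or.inr ⟨s', t', (YE_false _ _ _ _ _).1 h, rfl, rfl⟩
    · rintro (⟨s', t', h, rfl, rfl⟩ | ⟨s', t', h, rfl, rfl⟩)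
      · exact (YE_true _ _ _ _ _).2 h
      · exact (YE_false _ _ _ _ _).2 h
  · rw [Set.disjoint_left]
    rintro ⟨s, t⟩ ⟨⟨s1, t1⟩, h1, h2⟩ ⟨⟨s', t'⟩, h3, h4⟩
    simp only [Prod.mk.injEq] at h2 h4
    have := h2.2.trans h4.2.symm
    simp at this

lemma YE_base (f r : ℕ) : (YE 0 f r).encard = if f = 0 ∧ r = 0 then 1 else 0 := by
  split_ifs with h
  · obtain ⟨rfl, rfl⟩ := h
    rw [Set.encard_eq_one]
    refine ⟨([], []), ?_⟩
    ext ⟨s, t⟩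
    simp only [YE, YA, Set.mem_ofPred_eq, Set.mem_singleton_iff, Prod.mk.injEq]
    constructor
    · rintro ⟨⟨h1, h2, h3, h4, h5, h6, h7⟩, h8⟩
      have := List.length_eq_zero_iff.1 h1
      subst this
      simp at h3 h4
      refine ⟨List.length_eq_zero_iff.1 ?_, rfl⟩
      rw [len_cnt, h4, h3]
    · rintro ⟨rfl, rfl⟩; simp
  · rw [Set.encard_eq_zero, Set.eq_empty_iff_forall_notMem]
    rintro ⟨s, t⟩ ⟨⟨h1, h2, h3, h4, h5, h6, h7⟩, h8⟩
    have := List.length_eq_zero_iff.1 h1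
    simp only at this
    subst this
    simp at h2 
    omega

lemma YE_big (m f r : ℕ) (h : f < r) : (YE m f r).encard = 0 := by
  rw [Set.encard_eq_zero, Set.eq_empty_iff_forall_notMem]
  rintro ⟨s, t⟩ ⟨⟨h1, h2, h3, h4, h5, h6, h7⟩, h8⟩
  omega

lemma Y_final (n k : ℕ) :
    {st : List Bool × List Bool |
        IsDyckPath (n + k) st.1 ∧ IsDyckPath (n + k) st.2 ∧ WeaklyBelow st.1 st.2 ∧
        st.1.drop (2 * (n + k) - k) = List.replicate k false ∧
        st.2.drop (2 * (n + k) - k) = List.replicate k false}.encard =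
    (YA (2 * n + k) k k).encard := by
  have hinj : Set.InjOn (fun p : List Bool × List Bool =>
      (p.1 ++ List.replicate k false, p.2 ++ List.replicate k false)) (YA (2 * n + k) k k) := by
    rintro ⟨a, b⟩ _ ⟨c, d⟩ _ h
    simpa using h
  rw [← hinj.encard_image]
  congr 1
  have e2 : 2 * (n + k) - k = 2 * n + k := by omega
  rw [e2]
  ext ⟨s, t⟩
  simp only [Set.mem_image, Prod.exists, Prod.mk.injEq, Set.mem_ofPred_eq]
  constructor
  · rintro ⟨⟨a1, a2, a3⟩, ⟨b1, b2, b3⟩, hw, hs, ht⟩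
    have es : s.take (2*n+k) ++ List.replicate k false = s := by
      rw [← hs, List.take_append_drop]
    have et : t.take (2*n+k) ++ List.replicate k false = t := by
      rw [← ht, List.take_append_drop]
    refine ⟨s.take (2*n+k), t.take (2*n+k), ?_, es, et⟩
    have ls := len_cnt (s.take (2*n+k))
    have lt := len_cnt (t.take (2*n+k))
    have cs : (s.take (2*n+k)).count true = n + k := by
      rw [← es] at a2; simpa [List.count_replicate] using a2
    have ct : (t.take (2*n+k)).count true = n + k := by
      rw [← et] at b2; simpa [List.count_replicate] using b2
    rw [List.length_take] at ls lt
    refine ⟨by simp; omega, ?_, ?_, ?_, le_rfl, ?_, ?_⟩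
    · simp only; omega
    · simp only; omega
    · simp only; omega
    · intro i
      simp only [List.take_take]
      exact a3 _
    · intro i
      simp only [List.take_take]
      have h := hw (min i (2*n+k))
      unfold pathHeight at h
      have l1 := len_cnt (s.take (min i (2*n+k)))
      have l2 := len_cnt (t.take (min i (2*n+k)))
      rw [List.length_take] at l1 l2
      omega
  · rintro ⟨s, t, ⟨h1, h2, h3, h4, h5, h6, h7⟩, rfl, rfl⟩
    simp only at h1 h2 h3 h4 h6 h7
    have ls := len_cnt s
    have lt := len_cnt t
    have hh : ∀ u : List Bool, u.length = 2*n+k → ∀ i,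
        ((u ++ List.replicate k false).take i).count true = (u.take i).count true ∧
        ((u ++ List.replicate k false).take i).count false =
          (u.take i).count false + min (i - (2*n+k)) k := by
      intro u hu i
      rw [List.take_append, List.take_replicate, hu]
      simp [List.count_append, List.count_replicate]
    have hsl : s.length = 2*n+k := by omega
    have q : ∀ i, (t.take i).count false ≤ (t.take i).count true ∧ ((2*n+k) ≤ i → 
       (t.take i).count false = n ∧ (t.take i).count true = n+k ∧
       (s.take i).count false = n ∧ (s.take i).count true = n+k) := by
      intro i
      have e6 := h6 i
      have e7 := h7 i
      have l1 := len_cnt (s.take i)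
      have l2 := len_cnt (t.take i)
      rw [List.length_take] at l1 l2
      refine ⟨by omega, fun hi => ?_⟩
      rw [cnt_take_all t _ _ (by omega), cnt_take_all s _ _ (by omega),
        cnt_take_all t _ _ (by omega), cnt_take_all s _ _ (by omega)]
      omega
    refine ⟨⟨?_, ?_, ?_⟩, ⟨?_, ?_, ?_⟩, ?_, ?_, ?_⟩
    · simp; omega
    · simp [List.count_replicate]; omega
    · intro i
      rw [(hh s hsl i).1, (hh s hsl i).2]
      have := h6 i
      have := (q i).2
      omega
    · simp; omega
    · simp [List.count_replicate]; omega
    · intro i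
      rw [(hh t h1 i).1, (hh t h1 i).2]
      have := q i
      omega
    · intro i
      unfold pathHeight
      rw [(hh t h1 i).1, (hh t h1 i).2, (hh s hsl i).1, (hh s hsl i).2]
      have := h7 i
      have l1 := len_cnt (s.take i)
      have l2 := len_cnt (t.take i)
      rw [List.length_take] at l1 l2
      omega
    · rw [← hsl]; simp
    · rw [← h1]; simp

def GoodM (m : ℕ) (M : Finset (ℕ × ℕ)) : Prop :=
  (∀ a b c d e g : ℕ, a < b → b < c → c < d → d < e → e < g →
    (a, e) ∈ M → (b, g) ∈ M → (c, d) ∉ M) ∧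
  ∀ x1 x2 x3 x4 x5 : ℕ, x1 < x2 → x2 < x3 → x3 < x4 → x4 < x5 →
          (x1, x5) ∈ M → (x3, x4) ∈ M → x2 ∉ fixedPts m M

def rOf (m : ℕ) (M : Finset (ℕ × ℕ)) : ℕ :=
  ((fixedPts m M).filter fun y => ∃ p ∈ M, y < p.1).card

def XS (m f : ℕ) : Set (Finset (ℕ × ℕ)) :=
  {M | IsPartialMatching m M ∧ GoodM m M ∧ (fixedPts m M).card = f}

def XE (m f r : ℕ) : Set (Finset (ℕ × ℕ)) := {M | M ∈ XS m f ∧ rOf m M = r}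

def XA (m f r : ℕ) : Set (Finset (ℕ × ℕ)) := {M | M ∈ XS m f ∧ rOf m M ≤ r}

lemma mem_fx {m : ℕ} {M : Finset (ℕ × ℕ)} {y : ℕ} :
    y ∈ fixedPts m M ↔ (1 ≤ y ∧ y ≤ m) ∧ ∀ p ∈ M, p.1 ≠ y ∧ p.2 ≠ y := by
  simp only [fixedPts, Finset.mem_filter, Finset.mem_Icc]

lemma XA_zero (m f : ℕ) : XA m f 0 = XE m f 0 := by
  ext M; simp [XA, XE]

lemma XA_succ (m f R : ℕ) :
    (XA m f (R+1)).encard = (XE m f (R+1)).encard + (XA m f R).encard := by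
  rw [← Set.encard_union_eq]
  · congr 1
    ext M
    simp only [XA, XE, Set.mem_ofPred_eq, Set.mem_union, ← and_or_left]
    refine and_congr_right fun _ => ?_
    omega
  · rw [Set.disjoint_left]
    rintro M h1 h2
    have := h1.2
    have := h2.2
    omega

lemma rOf_le (m : ℕ) (M : Finset (ℕ × ℕ)) : rOf m M ≤ (fixedPts m M).card :=
  Finset.card_filter_le _ _

lemma XE_big (m f r : ℕ) (h : f < r) : (XE m f r).encard = 0 := by
  rw [Set.encard_eq_zero, Set.eq_empty_iff_forall_notMem]
  rintro M ⟨⟨h1, h2, h3⟩, h4⟩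
  have := rOf_le m M
  omega

lemma XE_base (f r : ℕ) : (XE 0 f r).encard = if f = 0 ∧ r = 0 then 1 else 0 := by
  have hfx : ∀ M, fixedPts 0 M = ∅ := by intro M; simp [fixedPts]
  have hr : ∀ M, rOf 0 M = 0 := by intro M; simp [rOf, hfx]
  split_ifs with h
  · obtain ⟨rfl, rfl⟩ := h
    rw [Set.encard_eq_one]
    refine ⟨∅, ?_⟩
    ext M
    simp only [XE, XS, Set.mem_ofPred_eq, Set.mem_singleton_iff, hfx, hr]
    constructor
    · rintro ⟨⟨h1, h2, h3⟩, h4⟩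
      rw [Finset.eq_empty_iff_forall_notMem]
      intro p hp
      have := h1.1 p hp
      omega
    · rintro rfl
      simp [IsPartialMatching, GoodM]
  · rw [Set.encard_eq_zero, Set.eq_empty_iff_forall_notMem]
    rintro M ⟨⟨h1, h2, h3⟩, h4⟩
    rw [hr] at h4
    rw [hfx] at h3
    simp at h3
    omega

lemma stepA (m f r : ℕ) (M : Finset (ℕ × ℕ)) :
    (M ∈ XE (m+1) (f+1) r ∧ ∀ p ∈ M, p.2 ≠ m+1) ↔ M ∈ XE m f r := by
  have key : (∀ p ∈ M, p.1 < p.2 ∧ p.2 ≤ m) → fixedPts (m+1) M = insert (m+1) (fixedPts m M) := by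
    intro h
    ext y
    simp only [Finset.mem_insert, mem_fx]
    constructor
    · rintro ⟨h1, h2⟩
      by_cases hy : y = m+1
      · exact Or.inl hy
      · exact Or.inr ⟨by omega, h2⟩
    · rintro (rfl | ⟨h1, h2⟩)
      · refine ⟨by omega, fun p hp => ?_⟩
        have := h p hp
        omega
      · exact ⟨by omega, h2⟩
  have hn : m + 1 ∉ fixedPts m M := by simp [mem_fx]
  have kr : (∀ p ∈ M, p.1 < p.2 ∧ p.2 ≤ m) → rOf (m+1) M = rOf m M := by
    intro h
    unfold rOf
    rw [key h, Finset.filter_insert, if_neg]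
    rintro ⟨p, hp, h1⟩
    have := h p hp
    omega
  constructor
  · rintro ⟨⟨⟨h1, h2, h3⟩, h4⟩, h5⟩
    have hM : ∀ p ∈ M, p.1 < p.2 ∧ p.2 ≤ m := by
      intro p hp
      have := h1.1 p hp
      have := h5 p hp
      omega
    rw [key hM, Finset.card_insert_of_notMem hn] at h3
    rw [kr hM] at h4
    refine ⟨⟨⟨?_, h1.2⟩, ⟨h2.1, ?_⟩, by omega⟩, h4⟩
    · intro p hp
      have := h1.1 p hp
      have := hM p hp
      omega
    · intro x1 x2 x3 x4 x5 a b c d e g hx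
      refine h2.2 x1 x2 x3 x4 x5 a b c d e g ?_
      rw [key hM]
      exact Finset.mem_insert_of_mem hx
  · rintro ⟨⟨h1, h2, h3⟩, h4⟩
    have hM : ∀ p ∈ M, p.1 < p.2 ∧ p.2 ≤ m := by
      intro p hp
      have := h1.1 p hp
      omega
    refine ⟨⟨⟨⟨?_, h1.2⟩, ⟨h2.1, ?_⟩, ?_⟩, ?_⟩, ?_⟩
    · intro p hp
      have := h1.1 p hp
      omega
    · intro x1 x2 x3 x4 x5 a b c d e g hx
      refine h2.2 x1 x2 x3 x4 x5 a b c d e g ?_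
      rw [key hM, Finset.mem_insert] at hx
      rcases hx with rfl | hx
      · have := hM _ e
        simp only at this
        omega
      · exact hx
    · rw [key hM, Finset.card_insert_of_notMem hn, h3]
    · rw [kr hM, h4]
    · intro p hp
      have := hM p hp
      omega

lemma stepA0 (m r : ℕ) (M : Finset (ℕ × ℕ)) (h : M ∈ XE (m+1) 0 r) :
    ∃ p ∈ M, p.2 = m + 1 := by
  by_contra hc
  push Not at hc
  obtain ⟨⟨h1, h2, h3⟩, h4⟩ := h
  have : m + 1 ∈ fixedPts (m+1) M := by
    rw [mem_fx]
    refine ⟨by omega, fun p hp => ?_⟩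
    have := h1.1 p hp
    have := hc p hp
    omega
  rw [Finset.card_eq_zero] at h3
  simp [h3] at this

section stepB
variable {m x : ℕ} {M : Finset (ℕ × ℕ)}

lemma B1 (h : IsPartialMatching m M) (hx : x ∈ fixedPts m M) :
    IsPartialMatching (m+1) (insert (x, m+1) M) := by
  rw [mem_fx] at hx
  refine ⟨?_, ?_⟩
  · intro p hp
    rw [Finset.mem_insert] at hp
    rcases hp with rfl | hp
    · simp only; omega
    · have := h.1 p hp; omega
  · intro p hp q hq hpq
    rw [Finset.mem_insert] at hp hq
    rcases hp with rfl | hp <;> rcases hq with rfl | hq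
    · exact absurd rfl hpq
    · have := h.1 q hq; have := hx.2 q hq
      simp only; omega
    · have := h.1 p hp; have := hx.2 p hp
      simp only; omega
    · exact h.2 p hp q hq hpq

lemma B2 (h : IsPartialMatching m M) (hx : x ∈ fixedPts m M) :
    fixedPts (m+1) (insert (x, m+1) M) = (fixedPts m M).erase x := by
  ext y
  rw [Finset.mem_erase, mem_fx, mem_fx]
  simp only [Finset.forall_mem_insert]
  constructor
  · rintro ⟨h1, h2, h3⟩
    exact ⟨by omega, by omega, h3⟩
  · rintro ⟨h1, h2, h3⟩
    exact ⟨by omega, by omega, h3⟩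

lemma B3 (h : IsPartialMatching m M) (hx : x ∈ fixedPts m M) :
    GoodM (m+1) (insert (x, m+1) M) ↔
      GoodM m M ∧ ∀ y ∈ fixedPts m M, x < y → ∀ p ∈ M, ¬ y < p.1 := by
  have hb : ∀ a b, (a, b) ∈ M → a < b ∧ b ≤ m := fun a b hab => by
    have := h.1 _ hab; simp only at this; omega
  unfold GoodM
  rw [B2 h hx]
  constructor
  · rintro ⟨h1, h2⟩
    refine ⟨⟨?_, ?_⟩, ?_⟩
    · intro a b c d e g i1 i2 i3 i4 i5 j1 j2 j3
      exact h1 a b c d e g i1 i2 i3 i4 i5 (Finset.mem_insert_of_mem j1)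
        (Finset.mem_insert_of_mem j2) (Finset.mem_insert_of_mem j3)
    · intro x1 x2 x3 x4 x5 i1 i2 i3 i4 j1 j2 j3
      by_cases hxx : x2 = x
      · subst hxx
        refine h1 x1 x2 x3 x4 x5 (m+1) i1 i2 i3 i4 ?_ (Finset.mem_insert_of_mem j1)
          (Finset.mem_insert_self _ _) (Finset.mem_insert_of_mem j2)
        have := hb _ _ j1
        omega
      · exact h2 x1 x2 x3 x4 x5 i1 i2 i3 i4 (Finset.mem_insert_of_mem j1)
          (Finset.mem_insert_of_mem j2) (Finset.mem_erase.2 ⟨hxx, j3⟩)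
    · rintro y hy hxy ⟨p1, p2⟩ hp hlt
      have := hb _ _ hp
      exact h2 x y p1 p2 (m+1) hxy hlt this.1 (by omega) (Finset.mem_insert_self _ _)
        (Finset.mem_insert_of_mem hp) (Finset.mem_erase.2 ⟨by omega, hy⟩)
  · rintro ⟨⟨h1, h2⟩, h3⟩
    refine ⟨?_, ?_⟩
    · intro a b c d e g i1 i2 i3 i4 i5 j1 j2 j3
      rw [Finset.mem_insert, Prod.mk.injEq] at j1 j2 j3
      rcases j3 with j3 | j3
      · rcases j2 with j2 | j2
        · omega
        · have := hb _ _ j2; omega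
      rcases j1 with j1 | j1
      · rcases j2 with j2 | j2
        · omega
        · have := hb _ _ j2; omega
      rcases j2 with ⟨rfl, rfl⟩ | j2
      · exact h2 a b c d e i1 i2 i3 i4 j1 j3 hx
      · exact h1 a b c d e g i1 i2 i3 i4 i5 j1 j2 j3
    · intro x1 x2 x3 x4 x5 i1 i2 i3 i4 j1 j2 j3
      rw [Finset.mem_insert, Prod.mk.injEq] at j1 j2
      rw [Finset.mem_erase] at j3
      rcases j2 with j2 | j2
      · rcases j1 with j1 | j1
        · omega
        · have := hb _ _ j1; omega
      rcases j1 with ⟨rfl, rfl⟩ | j1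
      · exact h3 x2 j3.2 i1 _ j2 i2
      · exact h2 x1 x2 x3 x4 x5 i1 i2 i3 i4 j1 j2 j3.2

lemma B4 (h : IsPartialMatching m M) (hx : x ∈ fixedPts m M)
    (hc : ∀ y ∈ fixedPts m M, x < y → ∀ p ∈ M, ¬ y < p.1) :
    rOf (m+1) (insert (x, m+1) M) = ((fixedPts m M).filter (· < x)).card := by
  unfold rOf
  rw [B2 h hx]
  congr 1
  ext y
  simp only [Finset.mem_filter, Finset.mem_erase, Finset.exists_mem_insert]
  constructor
  · rintro ⟨⟨h1, h2⟩, h3 | ⟨p, hp, h3⟩⟩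
    · exact ⟨h2, h3⟩
    · refine ⟨h2, ?_⟩
      by_contra hh
      exact hc y h2 (by omega) p hp h3
  · rintro ⟨h1, h2⟩
    exact ⟨⟨by omega, h1⟩, Or.inl h2⟩

lemma B5 (hx : x ∈ fixedPts m M) :
    (∀ y ∈ fixedPts m M, x < y → ∀ p ∈ M, ¬ y < p.1) ↔
      rOf m M ≤ ((fixedPts m M).filter (· < x)).card + 1 := by
  have hni : x ∉ (fixedPts m M).filter (· < x) := by simp
  constructor
  · intro hc
    rw [← Finset.card_insert_of_notMem hni]
    apply Finset.card_le_card
    intro y hy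
    rw [Finset.mem_filter] at hy
    obtain ⟨h1, p, hp, h2⟩ := hy
    rw [Finset.mem_insert, Finset.mem_filter]
    by_contra hh
    push Not at hh
    have := hh.2 h1
    exact hc y h1 (by omega) p hp h2
  · intro hr y hy hxy p hp hlt
    have hni2 : y ∉ insert x ((fixedPts m M).filter (· < x)) := by
      simp; omega
    have : (insert y (insert x ((fixedPts m M).filter (· < x)))).card ≤ rOf m M := by
      apply Finset.card_le_card
      intro z hz
      rw [Finset.mem_insert, Finset.mem_insert, Finset.mem_filter] at hz
      rw [Finset.mem_filter]
      rcases hz with rfl | rfl | hz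
      · exact ⟨hy, p, hp, hlt⟩
      · exact ⟨hx, p, hp, by omega⟩
      · exact ⟨hz.1, p, hp, by omega⟩
    rw [Finset.card_insert_of_notMem hni2, Finset.card_insert_of_notMem hni] at this
    omega

def cutM (m : ℕ) (M : Finset (ℕ × ℕ)) : Finset (ℕ × ℕ) := M.filter fun p => p.2 ≠ m+1

lemma cut_insert (h : IsPartialMatching m M) : cutM m (insert (x, m+1) M) = M := by
  unfold cutM
  ext p
  simp only [Finset.mem_filter, Finset.mem_insert]
  constructor
  · rintro ⟨rfl | h1, h2⟩
    · exact absurd rfl h2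
    · exact h1
  · intro hp
    have := h.1 p hp
    exact ⟨Or.inr hp, by omega⟩

lemma B6 (h : IsPartialMatching (m+1) M) (hx : (x, m+1) ∈ M) :
    IsPartialMatching m (cutM m M) ∧ x ∈ fixedPts m (cutM m M) ∧ insert (x, m+1) (cutM m M) = M := by
  unfold cutM
  refine ⟨⟨?_, ?_⟩, ?_, ?_⟩
  · intro p hp
    rw [Finset.mem_filter] at hp
    have := h.1 p hp.1
    omega
  · intro p hp q hq
    rw [Finset.mem_filter] at hp hq
    exact h.2 p hp.1 q hq.1
  · rw [mem_fx]
    have := h.1 _ hx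
    simp only at this
    refine ⟨by omega, ?_⟩
    intro p hp
    rw [Finset.mem_filter] at hp
    have := h.2 p hp.1 _ hx (by rintro rfl; exact hp.2 rfl)
    exact ⟨this.1, this.2.2.1⟩
  · ext p
    rw [Finset.mem_insert, Finset.mem_filter]
    constructor
    · rintro (rfl | hp)
      · exact hx
      · exact hp.1
    · intro hp
      by_cases h2 : p.2 = m+1
      · left
        by_contra hne
        have := h.2 p hp _ hx hne
        exact this.2.2.2 h2
      · exact Or.inr ⟨hp, h2⟩

end stepB

lemma lt_card_inj (F : Finset ℕ) (x y : ℕ) (hx : x ∈ F) (h : x < y) :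
    (F.filter (· < x)).card < (F.filter (· < y)).card := by
  apply Finset.card_lt_card
  rw [Finset.ssubset_iff_of_subset]
  · exact ⟨x, by simp [hx, h], by simp⟩
  · intro z hz
    rw [Finset.mem_filter] at *
    exact ⟨hz.1, by omega⟩

lemma lt_card_uniq (F : Finset ℕ) (x y : ℕ) (hx : x ∈ F) (hy : y ∈ F)
    (h : (F.filter (· < x)).card = (F.filter (· < y)).card) : x = y := by
  rcases lt_trichotomy x y with h1 | h1 | h1
  · have := lt_card_inj F x y hx h1; omega
  · exact h1
  · have := lt_card_inj F y x hy h1; omega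

lemma exists_nth (F : Finset ℕ) (r : ℕ) (h : r < F.card) :
    ∃ x ∈ F, (F.filter (· < x)).card = r := by
  have h1 : F.image (fun x => (F.filter (· < x)).card) = Finset.range F.card := by
    apply Finset.eq_of_subset_of_card_le
    · intro z hz
      rw [Finset.mem_image] at hz
      obtain ⟨x, hx, rfl⟩ := hz
      rw [Finset.mem_range]
      apply Finset.card_lt_card
      rw [Finset.ssubset_iff_of_subset (Finset.filter_subset _ _)]
      exact ⟨x, hx, by simp⟩
    · rw [Finset.card_image_of_injOn, Finset.card_range]
      intro x hx y hy hxy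
      exact lt_card_uniq F x y hx hy hxy
  have h2 := Finset.mem_range.2 h
  rw [← h1, Finset.mem_image] at h2
  exact h2

lemma stepB (m f r : ℕ) (hr : r ≤ f) :
    {M | M ∈ XE (m+1) f r ∧ ∃ p ∈ M, p.2 = m+1}.encard = (XA m (f+1) (r+1)).encard := by
  have fwd : ∀ M, M ∈ XE (m+1) f r → (∃ p ∈ M, p.2 = m+1) →
      cutM m M ∈ XA m (f+1) (r+1) ∧ ∃ x ∈ fixedPts m (cutM m M),
        insert (x, m+1) (cutM m M) = M ∧
        ((fixedPts m (cutM m M)).filter (· < x)).card = r := by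
    rintro M ⟨⟨h1, h2, h3⟩, h4⟩ ⟨⟨x, z⟩, hp, hz⟩
    simp only at hz
    subst hz
    obtain ⟨b1, b2, b3⟩ := B6 h1 hp
    rw [← b3] at h2 h3 h4
    rw [B3 b1 b2] at h2
    rw [B4 b1 b2 h2.2] at h4
    rw [B2 b1 b2, Finset.card_erase_of_mem b2] at h3
    have := (B5 b2).1 h2.2
    have hpos : 0 < (fixedPts m (cutM m M)).card := Finset.card_pos.2 ⟨x, b2⟩
    exact ⟨⟨⟨b1, h2.1, by omega⟩, by omega⟩, x, b2, b3, h4⟩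
  have hinj : Set.InjOn (cutM m) {M | M ∈ XE (m+1) f r ∧ ∃ p ∈ M, p.2 = m+1} := by
    rintro M ⟨h1, h2⟩ N ⟨h3, h4⟩ hMN
    obtain ⟨_, x, hx, e1, e2⟩ := fwd M h1 h2
    obtain ⟨_, y, hy, e3, e4⟩ := fwd N h3 h4
    rw [hMN] at hx e1 e2
    have := lt_card_uniq _ x y hx hy (by omega)
    exact e1.symm.trans (this ▸ e3)
  rw [← hinj.encard_image]
  congr 1
  ext M
  constructor
  · rintro ⟨N, ⟨h1, h2⟩, rfl⟩
    exact (fwd N h1 h2).1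
  · rintro ⟨⟨h1, h2, h3⟩, h4⟩
    obtain ⟨x, hx, hxr⟩ := exists_nth (fixedPts m M) r (by omega)
    have hc := (B5 hx).2 (by omega)
    refine ⟨insert (x, m+1) M, ⟨⟨⟨B1 h1 hx, (B3 h1 hx).2 ⟨h2, hc⟩, ?_⟩, ?_⟩, ?_⟩, cut_insert h1⟩
    · rw [B2 h1 hx, Finset.card_erase_of_mem hx]; omega
    · rw [B4 h1 hx hc, hxr]
    · exact ⟨_, Finset.mem_insert_self _ _, rfl⟩

lemma XE_rec0 (m r : ℕ) (hr : r ≤ 0) : (XE (m+1) 0 r).encard = (XA m 1 (r+1)).encard := by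
  rw [← stepB m 0 r hr]
  congr 1
  ext M
  exact ⟨fun h => ⟨h, stepA0 m r M h⟩, fun h => h.1⟩

lemma XE_rec1 (m f r : ℕ) (hr : r ≤ f + 1) :
    (XE (m+1) (f+1) r).encard = (XE m f r).encard + (XA m (f+2) (r+1)).encard := by
  rw [← stepB m (f+1) r hr, ← Set.encard_union_eq]
  · congr 1
    ext M
    rw [Set.mem_union, ← stepA m f r]
    simp only [Set.mem_ofPred_eq]
    constructor
    · intro h
      by_cases hc : ∃ p ∈ M, p.2 = m+1
      · exact Or.inr ⟨h, hc⟩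
      · push Not at hc
        exact Or.inl ⟨h, hc⟩
    · rintro (h | h)
      · exact h.1
      · exact h.1
  · rw [Set.disjoint_left]
    rintro M h1 ⟨h2, p, hp, h3⟩
    rw [← stepA] at h1
    exact h1.2 p hp h3

lemma XYA (m f : ℕ) (h : ∀ r, (XE m f r).encard = (YE m f r).encard) (R : ℕ) (hR : R ≤ f) :
    (XA m f R).encard = (YA m f R).encard := by
  induction R with
  | zero => rw [XA_zero, YA_zero, h]
  | succ R ih => rw [XA_succ, YA_succ m f R hR, h, ih (by omega)]

lemma XYE (m : ℕ) : ∀ f r, (XE m f r).encard = (YE m f r).encard := by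
  induction m with
  | zero => intro f r; rw [XE_base, YE_base]
  | succ m ih =>
    intro f r
    by_cases hr : r ≤ f
    · cases f with
      | zero => rw [XE_rec0 m r hr, YE_rec0, XYA m _ (ih _) _ (by omega)]
      | succ f => rw [XE_rec1 m f r hr, YE_rec1, ih, XYA m _ (ih _) _ (by omega)]
    · rw [XE_big _ _ _ (by omega), YE_big _ _ _ (by omega)]

lemma contains_iff (M : Finset (ℕ × ℕ)) : MatchContains p213 M ↔
    ∃ a b c d e g : ℕ, a < b ∧ b < c ∧ c < d ∧ d < e ∧ e < g ∧
    (a, e) ∈ M ∧ (b, g) ∈ M ∧ (c, d) ∈ M := by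
  constructor
  · rintro ⟨f, hf, h⟩
    have h0 := h 0
    have h1 := h 1
    have h2 := h 2
    refine ⟨f ⟨0, by omega⟩, f ⟨1, by omega⟩, f ⟨2, by omega⟩, f ⟨3, by omega⟩, f ⟨4, by omega⟩,
      f ⟨5, by omega⟩, ?_, ?_, ?_, ?_, ?_, h0, h1, h2⟩ <;> apply hf <;> simp
  · rintro ⟨a, b, c, d, e, g, h1, h2, h3, h4, h5, h6, h7, h8⟩
    refine ⟨![a, b, c, d, e, g], ?_, ?_⟩
    · apply Fin.strictMono_iff_lt_succ.2
      intro i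
      fin_cases i <;> simpa
    · intro i
      fin_cases i
      · exact h6
      · exact h7
      · exact h8

lemma rank_lt {S : Finset ℕ} {x y : ℕ} (hy : y ∈ S) (h : x < y) : rankIn S x < rankIn S y := by
  unfold rankIn
  apply Finset.card_lt_card
  rw [Finset.ssubset_iff_of_subset]
  · exact ⟨y, by simp [hy], by simp [h]⟩
  · intro z hz
    rw [Finset.mem_filter] at *
    exact ⟨hz.1, by omega⟩

lemma rank_lt_iff {S : Finset ℕ} {x y : ℕ} (hx : x ∈ S) (hy : y ∈ S) :
    rankIn S x < rankIn S y ↔ x < y := by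
  refine ⟨fun h => ?_, rank_lt hy⟩
  by_contra hh
  rcases (not_lt.1 hh).lt_or_eq with h1 | h1
  · have := rank_lt hx h1; omega
  · subst h1; omega

lemma rank_inj {S : Finset ℕ} {x y : ℕ} (hx : x ∈ S) (hy : y ∈ S)
    (h : rankIn S x = rankIn S y) : x = y := by
  have h1 := rank_lt_iff hx hy
  have h2 := rank_lt_iff hy hx
  omega

lemma mem_matched {m : ℕ} {M : Finset (ℕ × ℕ)} (h : IsPartialMatching m M) {p : ℕ × ℕ}
    (hp : p ∈ M) : p.1 ∈ matchedSet m M ∧ p.2 ∈ matchedSet m M := by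
  have := h.1 p hp
  simp only [matchedSet, Finset.mem_filter, Finset.mem_Icc]
  exact ⟨⟨by omega, p, hp, Or.inl rfl⟩, ⟨by omega, p, hp, Or.inr rfl⟩⟩

lemma avoid_iff {m : ℕ} {M : Finset (ℕ × ℕ)} (h : IsPartialMatching m M) :
    MatchAvoids p213 (relabeled m M) ↔ ∀ a b c d e g : ℕ, a < b → b < c → c < d → d < e → e < g →
    (a, e) ∈ M → (b, g) ∈ M → (c, d) ∉ M := by
  unfold MatchAvoids
  rw [contains_iff]
  constructor
  · intro hn a b c d e g i1 i2 i3 i4 i5 j1 j2 j3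
    obtain ⟨ma, me⟩ := mem_matched h j1
    obtain ⟨mb, mg⟩ := mem_matched h j2
    obtain ⟨mc, md⟩ := mem_matched h j3
    exact hn ⟨_, _, _, _, _, _, rank_lt mb i1, rank_lt mc i2, rank_lt md i3, rank_lt me i4,
      rank_lt mg i5, Finset.mem_image_of_mem _ j1, Finset.mem_image_of_mem _ j2,
      Finset.mem_image_of_mem _ j3⟩
  · rintro hn ⟨a, b, c, d, e, g, i1, i2, i3, i4, i5, j1, j2, j3⟩
    simp only [relabeled, Finset.mem_image, Prod.mk.injEq, Prod.exists] at j1 j2 j3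
    obtain ⟨a, e, k1, rfl, rfl⟩ := j1
    obtain ⟨b, g, k2, rfl, rfl⟩ := j2
    obtain ⟨c, d, k3, rfl, rfl⟩ := j3
    obtain ⟨ma, me⟩ := mem_matched h k1
    obtain ⟨mb, mg⟩ := mem_matched h k2
    obtain ⟨mc, md⟩ := mem_matched h k3
    exact hn a b c d e g ((rank_lt_iff ma mb).1 i1) ((rank_lt_iff mb mc).1 i2)
      ((rank_lt_iff mc md).1 i3) ((rank_lt_iff md me).1 i4) ((rank_lt_iff me mg).1 i5) k1 k2 k3

lemma matched_card (m : ℕ) (M : Finset (ℕ × ℕ)) :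
    (matchedSet m M).card + (fixedPts m M).card = m := by
  have : fixedPts m M = (Finset.Icc 1 m).filter fun x => ¬ ∃ p ∈ M, p.1 = x ∨ p.2 = x := by
    unfold fixedPts
    apply Finset.filter_congr
    intro x _
    push Not
    rfl
  rw [this, matchedSet, Finset.card_filter_add_card_filter_not]
  simp

lemma perfect_relabeled (n k : ℕ) (M : Finset (ℕ × ℕ)) (h : IsPartialMatching (2 * n + k) M)
    (hk : (fixedPts (2 * n + k) M).card = k) : IsPerfectMatching n (relabeled (2 * n + k) M) := by
  have hc := matched_card (2*n+k) M
  have hm : ∀ p ∈ M, _ := fun p hp => mem_matched h hp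
  have hS : ∀ x ∈ matchedSet (2*n+k) M, ∃ p ∈ M, p.1 = x ∨ p.2 = x := by
    intro x hx
    exact (Finset.mem_filter.1 hx).2
  unfold relabeled
  generalize matchedSet (2*n+k) M = S at *
  have hc2 : S.card = 2 * n := by omega
  have hr : ∀ x ∈ S, 1 ≤ rankIn S x ∧ rankIn S x ≤ 2 * n := by
    intro x hx
    refine ⟨Finset.card_pos.2 ⟨x, by simp [hx]⟩, ?_⟩
    rw [← hc2]
    exact Finset.card_filter_le _ _
  refine ⟨?_, ?_⟩
  · intro q hq
    rw [Finset.mem_image] at hq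
    obtain ⟨p, hp, rfl⟩ := hq
    have h1 := hm p hp
    exact ⟨rank_lt h1.2 (h.1 p hp).1, (hr _ h1.1).1, (hr _ h1.2).2⟩
  · intro x hx1 hx2
    have himg : S.image (rankIn S) = Finset.Icc 1 (2*n) := by
      apply Finset.eq_of_subset_of_card_le
      · intro z hz
        rw [Finset.mem_image] at hz
        obtain ⟨x, hx, rfl⟩ := hz
        exact Finset.mem_Icc.2 (hr x hx)
      · rw [Finset.card_image_of_injOn]
        · simp [hc2]
        · intro a ha b hb hab
          exact rank_inj ha hb hab
    have hx : x ∈ S.image (rankIn S) := by rw [himg]; simp; omega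
    rw [Finset.mem_image] at hx
    obtain ⟨z, hz, rfl⟩ := hx
    obtain ⟨p, hp, hpz⟩ := hS z hz
    refine ⟨(rankIn S p.1, rankIn S p.2), ⟨Finset.mem_image_of_mem _ hp, ?_⟩, ?_⟩
    · rcases hpz with rfl | rfl <;> simp
    · rintro q' ⟨hq', hqz⟩
      rw [Finset.mem_image] at hq'
      obtain ⟨q, hq, rfl⟩ := hq'
      have hqz2 : q.1 = z ∨ q.2 = z := by
        rcases hqz with hh | hh
        · exact Or.inl (rank_inj (hm q hq).1 hz hh)
        · exact Or.inr (rank_inj (hm q hq).2 hz hh)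
      have : q = p := by
        by_contra hne
        have := h.2 q hq p hp hne
        omega
      rw [this]

/-- `|M_n^k(213)|` equals the number of pairs `(D_0, D_1)` of noncrossing
Dyck paths of semilength `n + k` both ending with `k` south steps. -/
theorem card_Mnk213_eq_card_noncrossing_pairs (n k : ℕ) :
    {M : Finset (ℕ × ℕ) |
        IsPartialMatching (2 * n + k) M ∧ (fixedPts (2 * n + k) M).card = k ∧
        IsPerfectMatching n (relabeled (2 * n + k) M) ∧
        MatchAvoids p213 (relabeled (2 * n + k) M) ∧
        ∀ x1 x2 x3 x4 x5 : ℕ, x1 < x2 → x2 < x3 → x3 < x4 → x4 < x5 →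
          (x1, x5) ∈ M → (x3, x4) ∈ M → x2 ∉ fixedPts (2 * n + k) M}.ncard =
    {st : List Bool × List Bool |
        IsDyckPath (n + k) st.1 ∧ IsDyckPath (n + k) st.2 ∧ WeaklyBelow st.1 st.2 ∧
        st.1.drop (2 * (n + k) - k) = List.replicate k false ∧
        st.2.drop (2 * (n + k) - k) = List.replicate k false}.ncard := by

  rw [Set.ncard_def, Set.ncard_def, Y_final, ← XYA _ _ (XYE _ _) _ le_rfl]
  congr 2
  ext M
  simp only [XA, XS, Set.mem_ofPred_eq]
  constructor
  · rintro ⟨h1, h2, h3, h4, h5⟩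
    refine ⟨⟨h1, ⟨(avoid_iff h1).1 h4, h5⟩, h2⟩, ?_⟩
    have := rOf_le (2 * n + k) M
    omega
  · rintro ⟨⟨h1, h2, h3⟩, h4⟩
    exact ⟨h1, h3, perfect_relabeled n k M h1 h3, (avoid_iff h1).2 h2.1, h2.2⟩
end
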